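/- arXiv:2105.07684 — 2 statements merged into one kernel-verified Lean document; each statement's English description precedes it below -/
import Mathlib

section
/- (Zador's Theorem.) Let p > 0, η > 0, and let X be an ℝ^d-valued random vector with E|X|^{p+η} < ∞ whose law P decomposes as P = h·λ_d + ν, where h ≥ 0 is measurable, λ_d is the Lebesgue measure on ℝ^d, and ν is singular with respect to λ_d. Then lim_{N→∞} N^{1/d} e_{p,N}(X) = J̃_{p,d} · ( ∫_{ℝ^d} h(x)^{d/(d+p)} dx )^{(d+p)/(dp)}, where J̃_{p,d} = inf_{N≥1} N^{1/d} e_{p,N}(U([0,1]^d)) ∈ (0,∞) and U([0,1]^d) denotes the uniform distribution on the unit hypercube [0,1]^d. -/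
open MeasureTheory Real Filter

noncomputable section

abbrev Euc (d : ℕ) : Type := EuclideanSpace ℝ (Fin d)

/-- L^p quantization error of a probability measure `μ` on ℝ^d w.r.t. a grid `Γ`. -/
def quantErrM (p : ℝ) {d : ℕ} (μ : Measure (Euc d)) (Γ : Finset (Euc d)) : ℝ :=
  (∫ x, (Metric.infDist x (Γ : Set (Euc d))) ^ p ∂μ) ^ (1 / p)

/-- Optimal L^p quantization error of `μ` at level `N`. -/
def optQuantErrM (p : ℝ) (N : ℕ) {d : ℕ} (μ : Measure (Euc d)) : ℝ :=
  sInf {e | ∃ Γ : Finset (Euc d), Γ.Nonempty ∧ Γ.card ≤ N ∧ e = quantErrM p μ Γ}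

/-- The uniform distribution on the unit hypercube `[0,1]^d`. -/
def unifCube (d : ℕ) : Measure (Euc d) :=
  (volume : Measure (Euc d)).restrict {x : Euc d | ∀ i, x i ∈ Set.Icc (0 : ℝ) 1}

/-- Zador's constant `J̃_{p,d} = inf_{N ≥ 1} N^{1/d} e_{p,N}(U([0,1]^d))`. -/
def zadorConst (p : ℝ) (d : ℕ) : ℝ :=
  sInf {e | ∃ N : ℕ, 1 ≤ N ∧ e = (N : ℝ) ^ (1 / (d : ℝ)) * optQuantErrM p N (unifCube d)}

open scoped NNReal ENNReal Topology

/-!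
Fix `r = p / d` and let `E(x, μ)` be the least energy `∫ dist(y, Γ) ^ p dμ(y)` over grids `Γ` of at
most `x` points. The claim is that `x ^ r * E(x, μ)` converges to `(c ∫ h ^ q) ^ (1 + r)` with
`q = (1 + r)⁻¹`, so one looks at the powers `q` of its lower and upper limits. Distributing the
points among two measures in proportion to these quantities shows that the upper one is subadditive,
and Radon's inequality shows that the lower one is superadditive on measures carried by disjoint
compact sets, whose grids do not help each other. Scaling and coverings by small cubes give the
value `c * volume A` for Lebesgue measure on a compact set `A`, and `0` for measures on compact null
sets. Pierce's bound by the moment of order `p + η` makes remainders negligible: it extends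
additivity to mutually singular measures and allows the passage from step functions to an arbitrary
density `h`.
-/

section Energy

variable {E F : Type*} [PseudoEMetricSpace E] [PseudoEMetricSpace F]

lemma infEDist_image_le_of_lipschitzWith {K : ℝ≥0} {f : E → F} (hf : LipschitzWith K f)
    (hK : K ≠ 0) (y : E) (s : Set E) :
    Metric.infEDist (f y) (f '' s) ≤ K * Metric.infEDist y s := by
  simp only [Metric.infEDist, iInf_image]
  rw [ENNReal.mul_iInf_of_ne (by simpa) (by simp)]
  refine iInf_mono fun z => ?_
  rw [ENNReal.mul_iInf_of_ne (by simpa) (by simp)]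
  exact iInf_mono fun _ => hf y z

variable [MeasurableSpace E] [MeasurableSpace F] {p : ℝ} {x y : ℝ≥0} {μ ν : Measure E}

/-- The optimal quantization energy of `μ` at level `x`: the infimum of `∫ dist(y, Γ) ^ p dμ(y)`
over the finite sets `Γ` of at most `x` points. Levels are real so that they can be rescaled
without rounding; the empty set is allowed and has `dist(y, ∅) = ∞`. -/
def quantEnergy (p : ℝ) (x : ℝ≥0) (μ : Measure E) : ℝ≥0∞ :=
  ⨅ Γ : {Γ : Finset E // (Γ.card : ℝ≥0) ≤ x}, ∫⁻ y, Metric.infEDist y (Γ.1 : Set E) ^ p ∂μ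

lemma quantEnergy_le {Γ : Finset E} (hΓ : (Γ.card : ℝ≥0) ≤ x) (μ : Measure E) :
    quantEnergy p x μ ≤ ∫⁻ y, Metric.infEDist y (Γ : Set E) ^ p ∂μ :=
  iInf_le _ (⟨Γ, hΓ⟩ : {Γ : Finset E // (Γ.card : ℝ≥0) ≤ x})

lemma le_quantEnergy_iff {c : ℝ≥0∞} :
    c ≤ quantEnergy p x μ ↔
      ∀ Γ : Finset E, (Γ.card : ℝ≥0) ≤ x → c ≤ ∫⁻ y, Metric.infEDist y (Γ : Set E) ^ p ∂μ := by
  simp only [quantEnergy, le_iInf_iff, Subtype.forall]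

lemma quantEnergy_anti (hxy : x ≤ y) (μ : Measure E) : quantEnergy p y μ ≤ quantEnergy p x μ :=
  le_quantEnergy_iff.2 fun _ hΓ => quantEnergy_le (hΓ.trans hxy) μ

lemma quantEnergy_mono (hμν : μ ≤ ν) (x : ℝ≥0) : quantEnergy p x μ ≤ quantEnergy p x ν :=
  le_quantEnergy_iff.2 fun _ hΓ => (quantEnergy_le hΓ μ).trans (lintegral_mono' hμν le_rfl)

lemma quantEnergy_zero (x : ℝ≥0) : quantEnergy p x (0 : Measure E) = 0 :=
  le_zero_iff.1 <| (quantEnergy_le (Γ := ∅) (by simp) 0).trans_eq (lintegral_zero_measure _)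

lemma quantEnergy_smul {c : ℝ≥0∞} (hc : c ≠ 0) (hc' : c ≠ ∞) (x : ℝ≥0) (μ : Measure E) :
    quantEnergy p x (c • μ) = c * quantEnergy p x μ := by
  simp only [quantEnergy, lintegral_smul_measure, smul_eq_mul, ENNReal.mul_iInf_of_ne hc hc']

lemma quantEnergy_add_le (hp : 0 ≤ p) (x y : ℝ≥0) (μ ν : Measure E) :
    quantEnergy p (x + y) (μ + ν) ≤ quantEnergy p x μ + quantEnergy p y ν := by
  classical
  refine ENNReal.le_iInf_add_iInf fun ⟨Γ, hΓ⟩ ⟨Δ, hΔ⟩ => ?_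
  have hcard : ((Γ ∪ Δ).card : ℝ≥0) ≤ x + y :=
    (Nat.cast_le.2 (Finset.card_union_le Γ Δ)).trans (by push_cast; gcongr)
  refine (quantEnergy_le hcard _).trans ?_
  rw [lintegral_add_measure]
  gcongr with z z <;> simp

lemma quantEnergy_sum_le (hp : 0 ≤ p) {ι : Type*} (S : Finset ι) (x : ℝ≥0) (μ : ι → Measure E) :
    quantEnergy p (S.card * x) (∑ i ∈ S, μ i) ≤ ∑ i ∈ S, quantEnergy p x (μ i) := by
  classical
  induction S using Finset.induction_on with
  | empty => simp [quantEnergy_zero]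
  | insert a s ha ih =>
    rw [Finset.sum_insert ha, Finset.sum_insert ha, Finset.card_insert_of_notMem ha,
      Nat.cast_add, Nat.cast_one, add_mul, one_mul, add_comm (_ * x)]
    exact (quantEnergy_add_le hp _ _ _ _).trans (add_le_add_right ih _)

lemma quantEnergy_map_le [OpensMeasurableSpace E] [BorelSpace F] (hp : 0 ≤ p) {K : ℝ≥0}
    {f : E → F} (hf : LipschitzWith K f) (hK : K ≠ 0) (x : ℝ≥0) (μ : Measure E) :
    quantEnergy p x (μ.map f) ≤ (K : ℝ≥0∞) ^ p * quantEnergy p x μ := by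
  classical
  have hKp : (K : ℝ≥0∞) ^ p ≠ ∞ := by simp [hp]
  have hKp0 : (K : ℝ≥0∞) ^ p ≠ 0 := by simp [hK]
  rw [quantEnergy, quantEnergy, ENNReal.mul_iInf_of_ne hKp0 hKp]
  refine le_iInf fun ⟨Γ, hΓ⟩ => ?_
  have hcard : ((Γ.image f).card : ℝ≥0) ≤ x := (Nat.cast_le.2 Finset.card_image_le).trans hΓ
  refine (quantEnergy_le hcard _).trans ?_
  rw [lintegral_map (measurable_infEDist.pow_const p) hf.continuous.measurable,
    ← lintegral_const_mul _ (measurable_infEDist.pow_const p)]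
  refine lintegral_mono fun y => ?_
  rw [← ENNReal.mul_rpow_of_nonneg _ _ hp, Finset.coe_image]
  gcongr
  exact infEDist_image_le_of_lipschitzWith hf hK y _

end Energy

section Mass

variable {E : Type*} [PseudoEMetricSpace E] [MeasurableSpace E] {p r : ℝ} {μ ν : Measure E}

/-- The asymptotic upper energy `limsup x ^ r * quantEnergy p x μ`, raised to the power that makes
it subadditive in `μ`. On `ℝ ^ d` the relevant rate is `r = p / d`, where `(1 + r)⁻¹ = d / (d + p)`
is the exponent of the density in Zador's theorem. -/
def upperQuantMass (p r : ℝ) (μ : Measure E) : ℝ≥0∞ :=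
  limsup (fun x : ℝ≥0 => (x : ℝ≥0∞) ^ r * quantEnergy p x μ) atTop ^ (1 + r)⁻¹

/-- The counterpart of `upperQuantMass` for the lower limit; it is superadditive on mutually
singular measures. -/
def lowerQuantMass (p r : ℝ) (μ : Measure E) : ℝ≥0∞ :=
  liminf (fun x : ℝ≥0 => (x : ℝ≥0∞) ^ r * quantEnergy p x μ) atTop ^ (1 + r)⁻¹

lemma upperQuantMass_rpow (hr : 0 ≤ r) (μ : Measure E) :
    upperQuantMass p r μ ^ (1 + r) =
      limsup (fun x : ℝ≥0 => (x : ℝ≥0∞) ^ r * quantEnergy p x μ) atTop := by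
  rw [upperQuantMass, ENNReal.rpow_inv_rpow (by positivity)]

lemma lowerQuantMass_rpow (hr : 0 ≤ r) (μ : Measure E) :
    lowerQuantMass p r μ ^ (1 + r) =
      liminf (fun x : ℝ≥0 => (x : ℝ≥0∞) ^ r * quantEnergy p x μ) atTop := by
  rw [lowerQuantMass, ENNReal.rpow_inv_rpow (by positivity)]

lemma lowerQuantMass_le_upperQuantMass (hr : 0 ≤ r) (μ : Measure E) :
    lowerQuantMass p r μ ≤ upperQuantMass p r μ :=
  ENNReal.rpow_le_rpow liminf_le_limsup (by positivity)

lemma lowerQuantMass_mono (hr : 0 ≤ r) (hμν : μ ≤ ν) :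
    lowerQuantMass p r μ ≤ lowerQuantMass p r ν :=
  ENNReal.rpow_le_rpow (liminf_le_liminf <| .of_forall fun x =>
    mul_le_mul_right (quantEnergy_mono hμν x) _) (by positivity)

lemma upperQuantMass_zero (hr : 0 ≤ r) : upperQuantMass p r (0 : Measure E) = 0 := by
  simp only [upperQuantMass, quantEnergy_zero, mul_zero]
  rw [← bot_eq_zero, limsup_const_bot, bot_eq_zero, ENNReal.zero_rpow_of_pos (by positivity)]

lemma map_mul_left_atTop {s : ℝ≥0} (hs : s ≠ 0) : map (s * ·) (atTop : Filter ℝ≥0) = atTop :=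
  (OrderIso.mulLeft₀ s (pos_iff_ne_zero.2 hs)).map_atTop

lemma rpow_mul_quantEnergy_mul {s : ℝ≥0} (hs : s ≠ 0) (x : ℝ≥0) (μ : Measure E) :
    (x : ℝ≥0∞) ^ r * quantEnergy p (s * x) μ =
      (s : ℝ≥0∞) ^ (-r) * (((s * x : ℝ≥0) : ℝ≥0∞) ^ r * quantEnergy p (s * x) μ) := by
  rw [ENNReal.coe_mul, ENNReal.mul_rpow_of_ne_top (by simp) (by simp), ← mul_assoc, ← mul_assoc,
    ENNReal.rpow_neg, ENNReal.inv_mul_cancel (by simp [hs]) (by simp [hs]), one_mul]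

lemma limsup_rpow_mul_quantEnergy_mul (hr : 0 ≤ r) {s : ℝ≥0} (hs : s ≠ 0) (μ : Measure E) :
    limsup (fun x : ℝ≥0 => (x : ℝ≥0∞) ^ r * quantEnergy p (s * x) μ) atTop =
      (s : ℝ≥0∞) ^ (-r) * upperQuantMass p r μ ^ (1 + r) := by
  simp only [rpow_mul_quantEnergy_mul hs, upperQuantMass_rpow hr]
  rw [ENNReal.limsup_const_mul_of_ne_top (by simp [hs])]
  conv_rhs => rw [← map_mul_left_atTop hs]
  rfl

lemma liminf_rpow_mul_quantEnergy_mul (hr : 0 ≤ r) {s : ℝ≥0} (hs : s ≠ 0) (μ : Measure E) :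
    liminf (fun x : ℝ≥0 => (x : ℝ≥0∞) ^ r * quantEnergy p (s * x) μ) atTop =
      (s : ℝ≥0∞) ^ (-r) * lowerQuantMass p r μ ^ (1 + r) := by
  simp only [rpow_mul_quantEnergy_mul hs, lowerQuantMass_rpow hr]
  rw [ENNReal.liminf_const_mul_of_ne_top (by simp [hs])]
  conv_rhs => rw [← map_mul_left_atTop hs]
  rfl

lemma rpow_neg_mul_rpow_one_add {a : ℝ≥0} (ha : a ≠ 0) (r : ℝ) :
    (a : ℝ≥0∞) ^ (-r) * (a : ℝ≥0∞) ^ (1 + r) = a := by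
  rw [← ENNReal.rpow_add _ _ (by simpa) (by simp), neg_add_cancel_comm_assoc, ENNReal.rpow_one]

lemma le_rpow_mul_of_rpow_neg_mul_le {s : ℝ≥0} (hs : s ≠ 0) {u v : ℝ≥0∞}
    (h : (s : ℝ≥0∞) ^ (-r) * u ≤ v) : u ≤ (s : ℝ≥0∞) ^ r * v := by
  have hmul := mul_le_mul_right h ((s : ℝ≥0∞) ^ r)
  rwa [← mul_assoc, ← ENNReal.rpow_add _ _ (by simpa) (by simp), add_neg_cancel,
    ENNReal.rpow_zero, one_mul] at hmul

lemma le_add_of_forall_coe_lt {u v w : ℝ≥0∞}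
    (h : ∀ a b : ℝ≥0, u < a → v < b → w ≤ a + b) : w ≤ u + v := by
  refine ENNReal.le_of_forall_pos_le_add fun ε hε huv => ?_
  obtain ⟨hu, hv⟩ := ENNReal.add_lt_top.1 huv
  have hε2 : ((ε / 2 : ℝ≥0) : ℝ≥0∞) ≠ 0 := by simp [hε.ne']
  obtain ⟨a, hua, ha⟩ := ENNReal.lt_iff_exists_nnreal_btwn.1 (ENNReal.lt_add_right hu.ne hε2)
  obtain ⟨b, hvb, hb⟩ := ENNReal.lt_iff_exists_nnreal_btwn.1 (ENNReal.lt_add_right hv.ne hε2)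
  calc w ≤ a + b := h a b hua hvb
    _ ≤ (u + (ε / 2 : ℝ≥0)) + (v + (ε / 2 : ℝ≥0)) := add_le_add ha.le hb.le
    _ = u + v + ε := by rw [add_add_add_comm, ← ENNReal.coe_add, add_halves]

-- `a` and `b` are the shares of the levels; optimal shares are proportional to the masses.
lemma le_add_of_forall_rpow_neg_mul_le (hr : 0 ≤ r) {u v w : ℝ≥0∞}
    (h : ∀ a b : ℝ≥0, a ≠ 0 → b ≠ 0 → ((a + b : ℝ≥0) : ℝ≥0∞) ^ (-r) * w ^ (1 + r) ≤
      (a : ℝ≥0∞) ^ (-r) * u ^ (1 + r) + (b : ℝ≥0∞) ^ (-r) * v ^ (1 + r)) :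
    w ≤ u + v := by
  refine le_add_of_forall_coe_lt fun a b hua hvb => ?_
  have ha : a ≠ 0 := fun h0 => not_lt_zero (hua.trans_eq (by simp [h0]))
  have hb : b ≠ 0 := fun h0 => not_lt_zero (hvb.trans_eq (by simp [h0]))
  have hle := calc ((a + b : ℝ≥0) : ℝ≥0∞) ^ (-r) * w ^ (1 + r)
      ≤ (a : ℝ≥0∞) ^ (-r) * (a : ℝ≥0∞) ^ (1 + r) + (b : ℝ≥0∞) ^ (-r) * (b : ℝ≥0∞) ^ (1 + r) :=
        (h a b ha hb).trans (by gcongr)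
    _ = ((a + b : ℝ≥0) : ℝ≥0∞) ^ (-r) * ((a + b : ℝ≥0) : ℝ≥0∞) ^ (1 + r) := by
        rw [rpow_neg_mul_rpow_one_add ha, rpow_neg_mul_rpow_one_add hb,
          rpow_neg_mul_rpow_one_add (by simp [ha]), ENNReal.coe_add]
  rw [← ENNReal.coe_add]
  have hab : a + b ≠ 0 := by simp [ha]
  generalize a + b = s at hle hab
  rwa [ENNReal.mul_le_mul_iff_right (by simp [hab]) (by simp [hab]),
    ENNReal.rpow_le_rpow_iff (by positivity)] at hle

lemma limsup_ennreal_add_le {ι : Type*} {f : Filter ι} (u v : ι → ℝ≥0∞) :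
    limsup (fun i => u i + v i) f ≤ limsup u f + limsup v f := by
  refine le_add_of_forall_coe_lt fun a b ha hb => limsup_le_of_le ?_ ?_
  · isBoundedDefault
  · filter_upwards [eventually_lt_of_limsup_lt ha, eventually_lt_of_limsup_lt hb] with i hi hi'
    exact add_le_add hi.le hi'.le

lemma liminf_ennreal_add_le {ι : Type*} {f : Filter ι} (u v : ι → ℝ≥0∞) :
    liminf (fun i => u i + v i) f ≤ liminf u f + limsup v f := by
  refine le_add_of_forall_coe_lt fun a b ha hb => liminf_le_of_frequently_le ?_ ?_
  · refine ((frequently_lt_of_liminf_lt (by isBoundedDefault) ha).and_eventually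
      (eventually_lt_of_limsup_lt hb)).mono fun i hi => ?_
    exact add_le_add hi.1.le hi.2.le
  · isBoundedDefault

lemma upperQuantMass_add_le (hp : 0 ≤ p) (hr : 0 ≤ r) (μ ν : Measure E) :
    upperQuantMass p r (μ + ν) ≤ upperQuantMass p r μ + upperQuantMass p r ν := by
  refine le_add_of_forall_rpow_neg_mul_le hr fun a b ha hb => ?_
  rw [← limsup_rpow_mul_quantEnergy_mul hr (by simp [ha]),
    ← limsup_rpow_mul_quantEnergy_mul hr ha, ← limsup_rpow_mul_quantEnergy_mul hr hb]
  refine (limsup_le_limsup <| .of_forall fun x => ?_).trans (limsup_ennreal_add_le _ _)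
  rw [← mul_add, add_mul]
  exact mul_le_mul_right (quantEnergy_add_le hp _ _ μ ν) _

lemma lowerQuantMass_add_le (hp : 0 ≤ p) (hr : 0 ≤ r) (μ ν : Measure E) :
    lowerQuantMass p r (μ + ν) ≤ lowerQuantMass p r μ + upperQuantMass p r ν := by
  refine le_add_of_forall_rpow_neg_mul_le hr fun a b ha hb => ?_
  rw [← liminf_rpow_mul_quantEnergy_mul hr (by simp [ha]),
    ← liminf_rpow_mul_quantEnergy_mul hr ha, ← limsup_rpow_mul_quantEnergy_mul hr hb]
  refine (liminf_le_liminf <| .of_forall fun x => ?_).trans (liminf_ennreal_add_le _ _)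
  rw [← mul_add, add_mul]
  exact mul_le_mul_right (quantEnergy_add_le hp _ _ μ ν) _

lemma upperQuantMass_smul (hr : 0 ≤ r) {c : ℝ≥0∞} (hc : c ≠ 0) (hc' : c ≠ ∞) (μ : Measure E) :
    upperQuantMass p r (c • μ) = c ^ (1 + r)⁻¹ * upperQuantMass p r μ := by
  simp only [upperQuantMass, quantEnergy_smul hc hc', mul_left_comm _ c]
  rw [ENNReal.limsup_const_mul_of_ne_top hc', ENNReal.mul_rpow_of_nonneg _ _ (by positivity)]

lemma lowerQuantMass_smul (hr : 0 ≤ r) {c : ℝ≥0∞} (hc : c ≠ 0) (hc' : c ≠ ∞) (μ : Measure E) :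
    lowerQuantMass p r (c • μ) = c ^ (1 + r)⁻¹ * lowerQuantMass p r μ := by
  simp only [lowerQuantMass, quantEnergy_smul hc hc', mul_left_comm _ c]
  rw [ENNReal.liminf_const_mul_of_ne_top hc', ENNReal.mul_rpow_of_nonneg _ _ (by positivity)]

end Mass

section Separation

variable {E : Type*} [EMetricSpace E] [MeasurableSpace E] {p r : ℝ}

lemma radon_inequality (hr : 0 ≤ r) {x y : ℝ≥0} (hx : x ≠ 0) (hy : y ≠ 0) (a b : ℝ≥0) :
    (x + y) ^ (-r) * (a + b) ^ (1 + r) ≤ x ^ (-r) * a ^ (1 + r) + y ^ (-r) * b ^ (1 + r) := by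
  have hself : ∀ {s : ℝ≥0}, s ≠ 0 → ∀ t, s ^ (-r) * t ^ (1 + r) = s * (t / s) ^ (1 + r) := by
    intro s hs t
    rw [NNReal.div_rpow, NNReal.rpow_add hs, NNReal.rpow_one, NNReal.rpow_neg]
    field_simp
  have hxy : x + y ≠ 0 := by simp [hx]
  have hconv := NNReal.rpow_arith_mean_le_arith_mean2_rpow (x / (x + y)) (y / (x + y)) (a / x)
    (b / y) (by rw [← add_div, div_self hxy]) (show 1 ≤ 1 + r by linarith)
  rw [hself hxy, hself hx, hself hy]
  calc (x + y) * ((a + b) / (x + y)) ^ (1 + r)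
      = (x + y) * (x / (x + y) * (a / x) + y / (x + y) * (b / y)) ^ (1 + r) := by
        congr 2; field_simp
    _ ≤ (x + y) * (x / (x + y) * (a / x) ^ (1 + r) + y / (x + y) * (b / y) ^ (1 + r)) := by
        gcongr
    _ = _ := by field_simp

-- A finite `δ`-net of `K` makes the points of the grid at distance at least `δ` from `K` useless.
lemma exists_forall_quantEnergy_restrict_le [OpensMeasurableSpace E] (hp : 0 ≤ p) {K : Set E}
    (hK : IsCompact K) {δ : ℝ} (hδ : 0 < δ) (μ : Measure E) :
    ∃ M : ℝ≥0, ∀ Γ Γ' : Finset E, (∀ y ∈ Γ, y ∈ Metric.thickening δ K → y ∈ Γ') →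
      quantEnergy p (Γ'.card + M) (μ.restrict K) ≤
        ∫⁻ x in K, Metric.infEDist x (Γ : Set E) ^ p ∂μ := by
  classical
  obtain ⟨S, -, hSfin, hKS⟩ :=
    Metric.exists_finite_isCover_of_isCompact (Real.toNNReal_pos.2 hδ).ne' hK
  refine ⟨hSfin.toFinset.card, fun Γ Γ' hΓ => ?_⟩
  have hcard : ((Γ' ∪ hSfin.toFinset).card : ℝ≥0) ≤ Γ'.card + hSfin.toFinset.card := by
    exact_mod_cast Finset.card_union_le _ _
  refine (quantEnergy_le hcard _).trans (setLIntegral_mono' hK.measurableSet fun x hx =>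
    ENNReal.rpow_le_rpow (Metric.le_infEDist.2 fun y hy => ?_) hp)
  by_cases hyΓ' : y ∈ Γ'
  · exact Metric.infEDist_le_edist_of_mem (by simp [hyΓ'])
  · obtain ⟨u, hu, hxu⟩ := hKS hx
    have hfar : ENNReal.ofReal δ ≤ edist x y := by
      by_contra! hlt
      refine hyΓ' (hΓ y hy ((Metric.mem_thickening_iff_exists_edist_lt _ _).2 ⟨x, hx, ?_⟩))
      rwa [edist_comm]
    exact (Metric.infEDist_le_edist_of_mem (y := u) (by simp [hu])).trans (hxu.trans hfar)

lemma exists_forall_quantEnergy_restrict_add_le [OpensMeasurableSpace E] (hp : 0 ≤ p)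
    {K L : Set E} (hK : IsCompact K) (hL : IsCompact L) (hKL : Disjoint K L) (μ ν : Measure E) :
    ∃ M : ℝ≥0, ∀ (x : ℝ≥0) (Γ : Finset E), (Γ.card : ℝ≥0) ≤ x → ∃ m n : ℝ≥0, m + n = x ∧
      quantEnergy p (m + M) (μ.restrict K) + quantEnergy p (n + M) (ν.restrict L) ≤
        ∫⁻ y, Metric.infEDist y (Γ : Set E) ^ p ∂(μ.restrict K + ν.restrict L) := by
  classical
  obtain ⟨δ, hδ, hdisj⟩ := hKL.exists_thickenings hK hL.isClosed
  obtain ⟨M₁, hM₁⟩ := exists_forall_quantEnergy_restrict_le hp hK hδ μ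
  obtain ⟨M₂, hM₂⟩ := exists_forall_quantEnergy_restrict_le hp hL hδ ν
  refine ⟨M₁ + M₂, fun x Γ hΓ => ?_⟩
  set Γ₁ := Γ.filter (· ∈ Metric.thickening δ K)
  set Γ₂ := Γ.filter (· ∉ Metric.thickening δ K)
  have hcard : (Γ₁.card + Γ₂.card : ℝ≥0) ≤ x := by
    rwa [← Nat.cast_add, Finset.card_filter_add_card_filter_not]
  have hΓ₁ : (Γ₁.card : ℝ≥0) ≤ x := le_self_add.trans hcard
  refine ⟨Γ₁.card, x - Γ₁.card, add_tsub_cancel_of_le hΓ₁, ?_⟩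
  rw [lintegral_add_measure]
  refine add_le_add ?_ ?_
  · refine (quantEnergy_anti ?_ _).trans (hM₁ Γ Γ₁ fun y hy hyK => by simp [Γ₁, hy, hyK])
    gcongr
    exact le_self_add
  · refine (quantEnergy_anti ?_ _).trans (hM₂ Γ Γ₂ fun y hy hyL => ?_)
    · exact add_le_add (le_tsub_of_add_le_left hcard) le_add_self
    · simpa [Γ₂, hy] using fun hyK => Set.disjoint_left.1 hdisj hyK hyL

end Separation

section LowerMass

variable {E : Type*} [EMetricSpace E] [MeasurableSpace E] {p r : ℝ} {μ : Measure E}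

lemma add_le_of_forall_coe_lt {u v w : ℝ≥0∞} (hu : u ≤ w) (hv : v ≤ w)
    (h : ∀ a b : ℝ≥0, a < u → b < v → (a + b : ℝ≥0∞) ≤ w) : u + v ≤ w := by
  rcases eq_or_ne u 0 with rfl | hu0
  · rwa [zero_add]
  rcases eq_or_ne v 0 with rfl | hv0
  · rwa [add_zero]
  refine le_of_forall_lt fun c hc => ?_
  obtain ⟨a, hau, b, hbv, hcab⟩ := ENNReal.exists_lt_add_of_lt_add hc hu0 hv0
  lift a to ℝ≥0 using hau.ne_top
  lift b to ℝ≥0 using hbv.ne_top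
  exact hcab.trans_le (h a b hau hbv)

lemma eventually_rpow_neg_mul_le_quantEnergy (hr : 0 ≤ r) {a : ℝ≥0}
    (ha : a < lowerQuantMass p r μ) :
    ∀ᶠ x : ℝ≥0 in atTop, (x : ℝ≥0∞) ^ (-r) * (a : ℝ≥0∞) ^ (1 + r) ≤ quantEnergy p x μ := by
  have hlt : (a : ℝ≥0∞) ^ (1 + r) < lowerQuantMass p r μ ^ (1 + r) :=
    ENNReal.rpow_lt_rpow ha (by positivity)
  rw [lowerQuantMass_rpow hr] at hlt
  filter_upwards [eventually_lt_of_lt_liminf hlt, eventually_ne_atTop 0] with x hx hx0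
  rw [ENNReal.rpow_neg, ENNReal.inv_mul_le_iff (by simp [hx0]) (by simp [hx0])]
  exact hx.le

lemma tendsto_rpow_mul_add_rpow_neg (M : ℝ≥0) (r : ℝ) :
    Tendsto (fun x : ℝ≥0 => (x : ℝ≥0∞) ^ r * ((x + M : ℝ≥0) : ℝ≥0∞) ^ (-r)) atTop (𝓝 1) := by
  have hlim : Tendsto (fun x : ℝ≥0 => (1 + M * x⁻¹) ^ (-r)) atTop (𝓝 ((1 + M * 0) ^ (-r))) :=
    ((tendsto_inv_atTop_zero.const_mul M).const_add 1).nnrpow tendsto_const_nhds (by simp)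
  rw [mul_zero, add_zero, NNReal.one_rpow] at hlim
  refine (ENNReal.tendsto_coe.2 hlim).congr' ?_
  filter_upwards [eventually_ne_atTop 0] with x hx
  have hxM : x + M = x * (1 + M * x⁻¹) := by field_simp
  rw [← ENNReal.coe_rpow_of_ne_zero hx, ← ENNReal.coe_rpow_of_ne_zero (by simp [hx]),
    ← ENNReal.coe_mul, hxM, NNReal.mul_rpow, NNReal.rpow_neg x, mul_inv_cancel_left₀ (by simp [hx])]

lemma le_lowerQuantMass_of_eventually (hr : 0 ≤ r) {c : ℝ≥0} {M : ℝ≥0}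
    (h : ∀ᶠ x : ℝ≥0 in atTop,
      ((x + M : ℝ≥0) : ℝ≥0∞) ^ (-r) * (c : ℝ≥0∞) ^ (1 + r) ≤ quantEnergy p x μ) :
    c ≤ lowerQuantMass p r μ := by
  have hlim := ENNReal.Tendsto.mul_const (b := (c : ℝ≥0∞) ^ (1 + r))
    (tendsto_rpow_mul_add_rpow_neg M r) (by simp)
  rw [one_mul] at hlim
  rw [lowerQuantMass, ENNReal.le_rpow_inv_iff (by positivity), ← hlim.liminf_eq]
  refine liminf_le_liminf (h.mono fun x hx => ?_)
  rw [mul_assoc]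
  gcongr

lemma lowerQuantMass_restrict_add_le [OpensMeasurableSpace E] (hp : 0 ≤ p) (hr : 0 ≤ r)
    {K L : Set E} (hK : IsCompact K) (hL : IsCompact L) (hKL : Disjoint K L) (μ ν : Measure E) :
    lowerQuantMass p r (μ.restrict K) + lowerQuantMass p r (ν.restrict L) ≤
      lowerQuantMass p r (μ.restrict K + ν.restrict L) := by
  refine add_le_of_forall_coe_lt (lowerQuantMass_mono hr (Measure.le_add_right le_rfl))
    (lowerQuantMass_mono hr (Measure.le_add_left le_rfl)) fun a b ha hb => ?_
  obtain ⟨x₁, hx₁⟩ := eventually_atTop.1 (eventually_rpow_neg_mul_le_quantEnergy hr ha)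
  obtain ⟨x₂, hx₂⟩ := eventually_atTop.1 (eventually_rpow_neg_mul_le_quantEnergy hr hb)
  obtain ⟨M, hM⟩ := exists_forall_quantEnergy_restrict_add_le hp hK hL hKL μ ν
  set M' := M + x₁ + x₂ + 1
  have hM' : ∀ m : ℝ≥0, m + M ≤ m + M' ∧ x₁ ≤ m + M' ∧ x₂ ≤ m + M' ∧ m + M' ≠ 0 := fun m =>
    ⟨by gcongr; exact le_add_right (le_add_right le_self_add),
      le_add_left (le_add_right (le_add_right le_add_self)),
      le_add_left (le_add_right le_add_self), by simp [M']⟩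
  rw [← ENNReal.coe_add]
  refine le_lowerQuantMass_of_eventually hr (M := 2 * M') (.of_forall fun x => ?_)
  refine le_quantEnergy_iff.2 fun Γ hΓ => ?_
  obtain ⟨m, n, rfl, hmn⟩ := hM x Γ hΓ
  obtain ⟨hm, hm₁, -, hm0⟩ := hM' m
  obtain ⟨hn, -, hn₂, hn0⟩ := hM' n
  calc ((m + n + 2 * M' : ℝ≥0) : ℝ≥0∞) ^ (-r) * ((a + b : ℝ≥0) : ℝ≥0∞) ^ (1 + r)
      ≤ ((m + M' : ℝ≥0) : ℝ≥0∞) ^ (-r) * (a : ℝ≥0∞) ^ (1 + r) +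
        ((n + M' : ℝ≥0) : ℝ≥0∞) ^ (-r) * (b : ℝ≥0∞) ^ (1 + r) := by
        have hr' : 0 ≤ 1 + r := by positivity
        have hadd : m + n + 2 * M' = (m + M') + (n + M') := by ring
        rw [hadd, ← ENNReal.coe_rpow_of_ne_zero (by simp [hm0]), ← ENNReal.coe_rpow_of_ne_zero hm0,
          ← ENNReal.coe_rpow_of_ne_zero hn0, ← ENNReal.coe_rpow_of_nonneg _ hr',
          ← ENNReal.coe_rpow_of_nonneg _ hr', ← ENNReal.coe_rpow_of_nonneg _ hr']
        exact_mod_cast radon_inequality hr hm0 hn0 a b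
    _ ≤ quantEnergy p (m + M') (μ.restrict K) + quantEnergy p (n + M') (ν.restrict L) :=
        add_le_add (hx₁ _ hm₁) (hx₂ _ hn₂)
    _ ≤ quantEnergy p (m + M) (μ.restrict K) + quantEnergy p (n + M) (ν.restrict L) :=
        add_le_add (quantEnergy_anti hm _) (quantEnergy_anti hn _)
    _ ≤ _ := hmn

end LowerMass

section Grid

variable {d : ℕ} {l : ℝ≥0}

/-- The half-open cube of side `l` with lower corner `l • z`; for fixed `l > 0` these cubes
partition the space. -/
def gridCube (l : ℝ≥0) (z : Fin d → ℤ) : Set (Euc d) :=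
  {x | ∀ i, x i ∈ Set.Ico (l * z i : ℝ) (l * (z i + 1))}

lemma mem_gridCube_iff (hl : l ≠ 0) {x : Euc d} {z : Fin d → ℤ} :
    x ∈ gridCube l z ↔ (fun i => ⌊x i / l⌋) = z := by
  have hl' : (0 : ℝ) < l := NNReal.coe_pos.2 (pos_iff_ne_zero.2 hl)
  simp only [gridCube, Set.mem_ofPred_eq, Set.mem_Ico, funext_iff, Int.floor_eq_iff,
    le_div_iff₀ hl', div_lt_iff₀ hl', mul_comm]

lemma mem_gridCube_floor (hl : l ≠ 0) (x : Euc d) : x ∈ gridCube l (fun i => ⌊x i / l⌋) :=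
  (mem_gridCube_iff hl).2 rfl

lemma disjoint_gridCube (hl : l ≠ 0) {z z' : Fin d → ℤ} (hzz' : z ≠ z') :
    Disjoint (gridCube l z) (gridCube l z') :=
  Set.disjoint_left.2 fun _ hx hx' =>
    hzz' (((mem_gridCube_iff hl).1 hx).symm.trans ((mem_gridCube_iff hl).1 hx'))

lemma gridCube_eq_preimage (l : ℝ≥0) (z : Fin d → ℤ) :
    gridCube l z = (WithLp.ofLp : Euc d → (Fin d → ℝ)) ⁻¹'
      (Set.univ.pi fun i => Set.Ico (l * z i : ℝ) (l * (z i + 1))) := by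
  ext x; simp [gridCube]

lemma measurableSet_gridCube (l : ℝ≥0) (z : Fin d → ℤ) : MeasurableSet (gridCube l z) := by
  rw [gridCube_eq_preimage]
  exact (PiLp.volume_preserving_ofLp (Fin d)).measurable
    (MeasurableSet.univ_pi fun _ => measurableSet_Ico)

lemma volume_gridCube (l : ℝ≥0) (z : Fin d → ℤ) : volume (gridCube l z) = (l : ℝ≥0∞) ^ d := by
  rw [gridCube_eq_preimage, (PiLp.volume_preserving_ofLp (Fin d)).measure_preimage
    (MeasurableSet.univ_pi fun _ => measurableSet_Ico).nullMeasurableSet, Real.volume_pi_Ico]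
  have hside : ∀ i, (l : ℝ) * (z i + 1) - l * z i = l := fun i => by ring
  simp [hside]

lemma dist_le_of_mem_gridCube {z : Fin d → ℤ} {x y : Euc d}
    (hx : x ∈ gridCube l z) (hy : y ∈ gridCube l z) : dist x y ≤ √d * l := by
  have hcoord : ∀ i, dist (x i) (y i) ≤ l := fun i => by
    rw [Real.dist_eq, abs_le]
    obtain ⟨hx₁, hx₂⟩ := hx i
    obtain ⟨hy₁, hy₂⟩ := hy i
    constructor <;> linarith
  calc dist x y = √(∑ i, dist (x i) (y i) ^ 2) := EuclideanSpace.dist_eq x y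
    _ ≤ √(∑ _i : Fin d, (l : ℝ) ^ 2) := by gcongr with i; exact hcoord i
    _ = √d * l := by simp

lemma edist_le_of_mem_gridCube {z : Fin d → ℤ} {x y : Euc d}
    (hx : x ∈ gridCube l z) (hy : y ∈ gridCube l z) : edist x y ≤ NNReal.sqrt d * l := by
  rw [edist_nndist, ← ENNReal.coe_mul, ENNReal.coe_le_coe, ← NNReal.coe_le_coe]
  simpa using dist_le_of_mem_gridCube hx hy

lemma card_mul_pow_le_volume_cthickening (hl : l ≠ 0) {K : Set (Euc d)}
    {S : Finset (Fin d → ℤ)} (hS : ∀ z ∈ S, (gridCube l z ∩ K).Nonempty) :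
    S.card * (l : ℝ≥0∞) ^ d ≤ volume (Metric.cthickening (√d * l) K) := by
  have hvol : volume (⋃ z ∈ S, gridCube l z) = S.card * (l : ℝ≥0∞) ^ d := by
    rw [measure_biUnion_finset (fun z _ z' _ => disjoint_gridCube hl)
      (fun z _ => measurableSet_gridCube l z)]
    simp [volume_gridCube]
  rw [← hvol]
  refine measure_mono (Set.iUnion₂_subset fun z hz x hx => ?_)
  obtain ⟨y, hy, hyK⟩ := hS z hz
  exact Metric.mem_cthickening_of_dist_le x y _ K hyK (dist_le_of_mem_gridCube hx hy)

lemma exists_gridCube_cover (hl : l ≠ 0) {K : Set (Euc d)} {v : ℝ≥0}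
    (hv : volume (Metric.cthickening (√d * l) K) ≤ v) :
    ∃ S : Finset (Fin d → ℤ), K ⊆ (⋃ z ∈ S, gridCube l z) ∧ S.card * l ^ d ≤ v := by
  set I : Set (Fin d → ℤ) := {z | (gridCube l z ∩ K).Nonempty}
  have hcard : ∀ S : Finset (Fin d → ℤ), ↑S ⊆ I → S.card * l ^ d ≤ v := fun S hS => by
    exact_mod_cast (card_mul_pow_le_volume_cthickening hl (fun z hz => hS hz)).trans hv
  have hfin : I.Finite := by
    by_contra hinf
    obtain ⟨n, hn⟩ := exists_nat_gt (v / l ^ d)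
    obtain ⟨S, hS, rfl⟩ := Set.Infinite.exists_subset_card_eq hinf n
    rw [div_lt_iff₀ (by positivity)] at hn
    exact (hcard S hS).not_gt hn
  refine ⟨hfin.toFinset, fun x hx => ?_, hcard _ (by simp)⟩
  simp only [Set.mem_iUnion, Set.Finite.mem_toFinset]
  exact ⟨_, ⟨x, mem_gridCube_floor hl x, hx⟩, mem_gridCube_floor hl x⟩

lemma tendsto_div_rpow_inv_nat (hd : 0 < d) (v : ℝ≥0) :
    Tendsto (fun x : ℝ≥0 => (v / x) ^ (d : ℝ)⁻¹) atTop (𝓝 0) := by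
  have hlim : Tendsto (fun x : ℝ≥0 => v / x) atTop (𝓝 0) := by
    simpa [div_eq_mul_inv] using (tendsto_inv_atTop_zero (𝕜 := ℝ≥0)).const_mul v
  have hd' : (0 : ℝ) < (d : ℝ)⁻¹ := by positivity
  simpa [NNReal.zero_rpow hd'.ne'] using hlim.nnrpow tendsto_const_nhds (.inr hd')

-- The side is chosen so that the cubes have volume `v / x`.
lemma eventually_exists_gridCube_cover (hd : 0 < d) {K : Set (Euc d)} (hK : IsCompact K)
    {v : ℝ≥0} (hv : volume K < v) :
    ∀ᶠ x : ℝ≥0 in atTop, ∃ S : Finset (Fin d → ℤ),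
      K ⊆ (⋃ z ∈ S, gridCube ((v / x) ^ (d : ℝ)⁻¹) z) ∧ S.card ≤ x := by
  have hv0 : v ≠ 0 := by rintro rfl; simp at hv
  have hside : Tendsto (fun x : ℝ≥0 => √d * ((v / x) ^ (d : ℝ)⁻¹ : ℝ≥0)) atTop (𝓝 0) := by
    simpa using (NNReal.tendsto_coe.2 (tendsto_div_rpow_inv_nat hd v)).const_mul (√d)
  filter_upwards [((tendsto_measure_cthickening_of_isCompact (μ := volume) hK).comp
    hside).eventually (gt_mem_nhds hv), eventually_ne_atTop 0] with x hx hx0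
  obtain ⟨S, hKS, hS⟩ := exists_gridCube_cover (by simp [hv0, hx0]) hx.le
  refine ⟨S, hKS, ?_⟩
  rw [NNReal.rpow_inv_natCast_pow _ hd.ne', mul_div_left_comm] at hS
  rwa [mul_le_iff_le_one_right (pos_iff_ne_zero.2 hv0), div_le_one (pos_iff_ne_zero.2 hx0)] at hS

end Grid

section Scaling

variable {E : Type*} [NormedAddCommGroup E] [NormedSpace ℝ E] [MeasurableSpace E] [BorelSpace E]
  [FiniteDimensional ℝ E] (μ : Measure E) [μ.IsAddHaarMeasure] {a : ℝ≥0}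

lemma map_smul_add_addHaar (ha : a ≠ 0) (c : E) :
    (a : ℝ≥0∞) ^ Module.finrank ℝ E • μ.map (fun y => a • y + c) = μ := by
  have hcomp : μ.map (fun y : E => a • y + c) = (μ.map (fun y => (a : ℝ) • y)).map (· + c) :=
    (Measure.map_map (measurable_add_const c) (measurable_const_smul (a : ℝ))).symm
  rw [hcomp, Measure.map_addHaar_smul _ (by simpa), Measure.map_smul, map_add_right_eq_self,
    smul_smul, abs_of_nonneg (by positivity), ← NNReal.coe_pow, ← NNReal.coe_inv,
    ENNReal.ofReal_coe_nnreal, ← ENNReal.coe_pow, ← ENNReal.coe_mul,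
    mul_inv_cancel₀ (pow_ne_zero _ ha), ENNReal.coe_one, one_smul]

lemma restrict_eq_smul_map_restrict_preimage (ha : a ≠ 0) (c : E) {s : Set E}
    (hs : MeasurableSet s) :
    μ.restrict s = (a : ℝ≥0∞) ^ Module.finrank ℝ E •
      (μ.restrict ((fun y => a • y + c) ⁻¹' s)).map (fun y => a • y + c) := by
  conv_lhs => rw [← map_smul_add_addHaar μ ha c]
  rw [Measure.restrict_smul, Measure.restrict_map (by fun_prop) hs]

lemma quantEnergy_restrict_le_preimage {p : ℝ} (hp : 0 ≤ p) (ha : a ≠ 0) (c : E) {s : Set E}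
    (hs : MeasurableSet s) (x : ℝ≥0) :
    quantEnergy p x (μ.restrict s) ≤ (a : ℝ≥0∞) ^ (Module.finrank ℝ E + p) *
      quantEnergy p x (μ.restrict ((fun y => a • y + c) ⁻¹' s)) := by
  have hlip : LipschitzWith a (fun y : E => a • y + c) := fun y z => by
    rw [edist_add_right]
    simpa [NNReal.smul_def] using lipschitzWith_smul (a : ℝ) y z
  have ha' : (a : ℝ≥0∞) ^ Module.finrank ℝ E ≠ 0 := by simp [ha]
  rw [restrict_eq_smul_map_restrict_preimage μ ha c hs, quantEnergy_smul ha' (by simp),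
    ENNReal.rpow_add _ _ (by simpa) (by simp), ENNReal.rpow_natCast, mul_assoc]
  exact mul_le_mul_right (quantEnergy_map_le hp hlip ha _ _) _

end Scaling

section Covering

variable {d : ℕ} {p : ℝ}

/-- The closed unit cube `[0,1]^d`, the set underlying `unifCube`. -/
def unitCube (d : ℕ) : Set (Euc d) :=
  {x | ∀ i, x i ∈ Set.Icc (0 : ℝ) 1}

lemma unifCube_eq (d : ℕ) : unifCube d = volume.restrict (unitCube d) := rfl

lemma unitCube_eq_preimage :
    unitCube d = (WithLp.ofLp : Euc d → (Fin d → ℝ)) ⁻¹' Set.univ.pi fun _ => Set.Icc 0 1 := by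
  ext x; simp only [unitCube, Set.mem_ofPred_eq, Set.mem_preimage, Set.mem_univ_pi]

lemma isCompact_unitCube : IsCompact (unitCube d) := by
  rw [unitCube_eq_preimage]
  exact (EuclideanSpace.equiv (Fin d) ℝ).toHomeomorph.isCompact_preimage.2
    (isCompact_univ_pi fun _ => isCompact_Icc)

lemma volume_unitCube : volume (unitCube d) = 1 := by
  rw [unitCube_eq_preimage, (PiLp.volume_preserving_ofLp (Fin d)).measure_preimage
    (MeasurableSet.univ_pi fun _ => measurableSet_Icc).nullMeasurableSet, volume_pi_pi]
  simp

instance : IsProbabilityMeasure (unifCube d) :=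
  ⟨by rw [unifCube_eq, Measure.restrict_apply_univ, volume_unitCube]⟩

lemma quantEnergy_restrict_gridCube_le (hp : 0 ≤ p) {l : ℝ≥0} (hl : l ≠ 0) (z : Fin d → ℤ)
    (x : ℝ≥0) :
    quantEnergy p x (volume.restrict (gridCube l z)) ≤
      (l : ℝ≥0∞) ^ (d + p) * quantEnergy p x (unifCube d) := by
  have hl' : (0 : ℝ) < l := NNReal.coe_pos.2 (pos_iff_ne_zero.2 hl)
  set c : Euc d := WithLp.toLp 2 fun i => l * z i with hc
  have hsub : (fun y : Euc d => l • y + c) ⁻¹' gridCube l z ⊆ unitCube d := by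
    intro y hy i
    obtain ⟨h₁, h₂⟩ := hy i
    simp only [hc, PiLp.add_apply, PiLp.smul_apply, NNReal.smul_def, smul_eq_mul] at h₁ h₂
    constructor <;> nlinarith
  have hle := quantEnergy_restrict_le_preimage volume hp hl c (measurableSet_gridCube l z) x
  rw [finrank_euclideanSpace_fin] at hle
  exact hle.trans (mul_le_mul_right (quantEnergy_mono (Measure.restrict_mono hsub le_rfl) x) _)

lemma quantEnergy_one_restrict_gridCube_le (hp : 0 ≤ p) (l : ℝ≥0) (z : Fin d → ℤ)
    (μ : Measure (Euc d)) :
    quantEnergy p 1 (μ.restrict (gridCube l z)) ≤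
      ((NNReal.sqrt d * l : ℝ≥0) : ℝ≥0∞) ^ p * μ (gridCube l z) := by
  rcases (gridCube l z).eq_empty_or_nonempty with hempty | ⟨a, ha⟩
  · simp [hempty, quantEnergy_zero]
  have hcard : (({a} : Finset (Euc d)).card : ℝ≥0) ≤ 1 := by simp
  refine (quantEnergy_le hcard _).trans ?_
  rw [← setLIntegral_const]
  refine setLIntegral_mono' (measurableSet_gridCube l z) fun y hy => ?_
  rw [Finset.coe_singleton, Metric.infEDist_singleton, ENNReal.coe_mul]
  gcongr
  exact edist_le_of_mem_gridCube hy ha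

lemma eventually_exists_quantEnergy_restrict_le (hp : 0 ≤ p) (hd : 0 < d) {K : Set (Euc d)}
    (hK : IsCompact K) {v : ℝ≥0} (hv : volume K < v) (s : ℝ≥0) (μ : Measure (Euc d)) :
    ∀ᶠ x : ℝ≥0 in atTop, ∃ S : Finset (Fin d → ℤ), S.card ≤ x ∧
      quantEnergy p (s * x) (μ.restrict K) ≤
        ∑ z ∈ S, quantEnergy p s (μ.restrict (gridCube ((v / x) ^ (d : ℝ)⁻¹) z)) := by
  filter_upwards [eventually_exists_gridCube_cover hd hK hv] with x ⟨S, hKS, hS⟩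
  set Q : (Fin d → ℤ) → Set (Euc d) := gridCube ((v / x) ^ (d : ℝ)⁻¹)
  have hμ : μ.restrict K ≤ ∑ z ∈ S, μ.restrict (Q z) := by
    refine (Measure.restrict_mono hKS le_rfl).trans ?_
    rw [← Measure.sum_coe_finset]
    exact Measure.restrict_biUnion_le S.countable_toSet
  refine ⟨S, hS, (quantEnergy_mono hμ _).trans ?_⟩
  have hlevel : S.card * s ≤ s * x := by rw [mul_comm s]; gcongr
  exact (quantEnergy_anti hlevel _).trans (quantEnergy_sum_le hp S s _)

lemma rpow_mul_rpow_div_rpow_inv {q : ℝ} (hq : 0 ≤ q) (d : ℕ) (v : ℝ≥0) {x : ℝ≥0} (hx : x ≠ 0) :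
    (x : ℝ≥0∞) ^ (q / d) * (((v / x) ^ (d : ℝ)⁻¹ : ℝ≥0) : ℝ≥0∞) ^ q = (v : ℝ≥0∞) ^ (q / d) := by
  rw [ENNReal.coe_rpow_of_nonneg _ (by positivity), ← ENNReal.rpow_mul, inv_mul_eq_div,
    ← ENNReal.mul_rpow_of_nonneg _ _ (by positivity), ← ENNReal.coe_mul, mul_div_cancel₀ _ hx]

lemma upperQuantMass_restrict_le_of_lt (hp : 0 ≤ p) (hd : 0 < d) {K : Set (Euc d)}
    (hK : IsCompact K) {v : ℝ≥0} (hv : volume K < v) (μ : Measure (Euc d)) :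
    upperQuantMass p (p / d) (μ.restrict K) ^ (1 + p / d) ≤
      (v : ℝ≥0∞) ^ (p / d) * ((NNReal.sqrt d : ℝ≥0∞) ^ p * μ Set.univ) := by
  rw [upperQuantMass_rpow (by positivity)]
  refine limsup_le_of_le (by isBoundedDefault) ?_
  filter_upwards [eventually_exists_quantEnergy_restrict_le hp hd hK hv 1 μ,
    eventually_ne_atTop 0] with x hx hx0
  obtain ⟨S, -, hle⟩ := hx
  set l : ℝ≥0 := (v / x) ^ (d : ℝ)⁻¹ with hl
  have hl0 : l ≠ 0 := by
    have hv0 : v ≠ 0 := by rintro rfl; simp at hv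
    simp [hl, hv0, hx0]
  rw [one_mul] at hle
  calc (x : ℝ≥0∞) ^ (p / d) * quantEnergy p x (μ.restrict K)
      ≤ (x : ℝ≥0∞) ^ (p / d) *
          ∑ z ∈ S, ((NNReal.sqrt d * l : ℝ≥0) : ℝ≥0∞) ^ p * μ (gridCube l z) := by
        gcongr
        exact hle.trans (Finset.sum_le_sum fun z _ => quantEnergy_one_restrict_gridCube_le hp l z μ)
    _ ≤ (x : ℝ≥0∞) ^ (p / d) * (((NNReal.sqrt d * l : ℝ≥0) : ℝ≥0∞) ^ p * μ Set.univ) := by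
        rw [← Finset.mul_sum]
        gcongr
        exact sum_measure_le_measure_univ
          (fun z _ => (measurableSet_gridCube l z).nullMeasurableSet)
          fun z _ z' _ hzz' => (disjoint_gridCube hl0 hzz').aedisjoint
    _ = _ := by
        rw [← rpow_mul_rpow_div_rpow_inv hp d v hx0, ENNReal.coe_mul,
          ENNReal.mul_rpow_of_nonneg _ _ hp]
        ring

lemma upperQuantMass_restrict_eq_zero (hp : 0 < p) (hd : 0 < d) {K : Set (Euc d)}
    (hK : IsCompact K) (hK0 : volume K = 0) (μ : Measure (Euc d)) [IsFiniteMeasure μ] :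
    upperQuantMass p (p / d) (μ.restrict K) = 0 := by
  have hr : 0 < p / d := by positivity
  set C : ℝ≥0∞ := (NNReal.sqrt d : ℝ≥0∞) ^ p * μ Set.univ
  have hC : C ≠ ∞ := ENNReal.mul_ne_top (by simp [hp.le]) (measure_ne_top _ _)
  have hlim : Tendsto (fun v : ℝ≥0 => (v : ℝ≥0∞) ^ (p / d) * C) (𝓝[>] 0) (𝓝 0) := by
    have hpow : Tendsto (fun v : ℝ≥0 => (v : ℝ≥0∞) ^ (p / d)) (𝓝[>] 0) (𝓝 0) := by
      have hcont : Continuous fun v : ℝ≥0 => (v : ℝ≥0∞) ^ (p / d) :=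
        (ENNReal.continuous_rpow_const).comp ENNReal.continuous_coe
      simpa [hr] using (hcont.tendsto 0).mono_left nhdsWithin_le_nhds
    simpa using ENNReal.Tendsto.mul_const hpow (.inr hC)
  have hle : upperQuantMass p (p / d) (μ.restrict K) ^ (1 + p / d) ≤ 0 := by
    refine ge_of_tendsto hlim ?_
    filter_upwards [self_mem_nhdsWithin] with v hv
    exact upperQuantMass_restrict_le_of_lt hp.le hd hK (by simpa [hK0] using hv) μ
  rwa [nonpos_iff_eq_zero, ENNReal.rpow_eq_zero_iff_of_pos (by positivity)] at hle

lemma upperQuantMass_volume_restrict_rpow_le_of_lt (hp : 0 ≤ p) (hd : 0 < d) {K : Set (Euc d)}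
    (hK : IsCompact K) {v : ℝ≥0} (hv : volume K < v) {s : ℝ≥0} (hs : s ≠ 0) :
    upperQuantMass p (p / d) (volume.restrict K) ^ (1 + p / d) ≤
      (v : ℝ≥0∞) ^ (1 + p / d) * ((s : ℝ≥0∞) ^ (p / d) * quantEnergy p s (unifCube d)) := by
  have hd' : (d : ℝ) ≠ 0 := by positivity
  have hexp : (d + p) / (d : ℝ) = 1 + p / d := by rw [add_div, div_self hd']
  rw [mul_left_comm]
  refine le_rpow_mul_of_rpow_neg_mul_le hs ?_
  rw [← limsup_rpow_mul_quantEnergy_mul (by positivity) hs]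
  refine limsup_le_of_le (by isBoundedDefault) ?_
  filter_upwards [eventually_exists_quantEnergy_restrict_le hp hd hK hv s volume,
    eventually_ne_atTop 0] with x hx hx0
  obtain ⟨S, hS, hle⟩ := hx
  set l : ℝ≥0 := (v / x) ^ (d : ℝ)⁻¹ with hl
  have hl0 : l ≠ 0 := by
    have hv0 : v ≠ 0 := by rintro rfl; simp at hv
    simp [hl, hv0, hx0]
  have hS' : (S.card : ℝ≥0∞) ≤ x := by exact_mod_cast hS
  calc (x : ℝ≥0∞) ^ (p / d) * quantEnergy p (s * x) (volume.restrict K)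
      ≤ (x : ℝ≥0∞) ^ (p / d) *
          ∑ _z ∈ S, (l : ℝ≥0∞) ^ (d + p) * quantEnergy p s (unifCube d) := by
        gcongr
        exact hle.trans (Finset.sum_le_sum fun z _ => quantEnergy_restrict_gridCube_le hp hl0 z s)
    _ ≤ (x : ℝ≥0∞) ^ (p / d) * (x * ((l : ℝ≥0∞) ^ (d + p) * quantEnergy p s (unifCube d))) := by
        rw [Finset.sum_const, nsmul_eq_mul]
        gcongr
    _ = _ := by
        have hx1 : (x : ℝ≥0∞) ^ (1 + p / d) = x * (x : ℝ≥0∞) ^ (p / d) := by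
          rw [ENNReal.rpow_add _ _ (by simpa) (by simp), ENNReal.rpow_one]
        rw [← hexp, ← rpow_mul_rpow_div_rpow_inv (by positivity) d v hx0, hexp, hx1]
        ring

lemma upperQuantMass_volume_restrict_rpow_le (hp : 0 ≤ p) (hd : 0 < d) {K : Set (Euc d)}
    (hK : IsCompact K) (hK0 : volume K ≠ 0) {s : ℝ≥0} (hs : s ≠ 0) :
    upperQuantMass p (p / d) (volume.restrict K) ^ (1 + p / d) ≤
      volume K ^ (1 + p / d) * ((s : ℝ≥0∞) ^ (p / d) * quantEnergy p s (unifCube d)) := by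
  lift volume K to ℝ≥0 using hK.measure_lt_top.ne with k hk
  have hk0 : (k : ℝ≥0∞) ^ (1 + p / d) ≠ 0 :=
    (ENNReal.rpow_eq_zero_iff_of_pos (by positivity)).not.2 hK0
  have hlim : Tendsto (fun v : ℝ≥0 => (v : ℝ≥0∞) ^ (1 + p / d)) (𝓝[>] k) (𝓝 (k ^ (1 + p / d))) :=
    ((ENNReal.continuous_rpow_const.comp ENNReal.continuous_coe).tendsto k).mono_left
      nhdsWithin_le_nhds
  refine ge_of_tendsto (ENNReal.Tendsto.mul_const hlim (.inl hk0)) ?_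
  filter_upwards [self_mem_nhdsWithin] with v hv
  exact upperQuantMass_volume_restrict_rpow_le_of_lt hp hd hK
    (hk ▸ ENNReal.coe_lt_coe.2 hv) hs

/-- Zador's constant `J̃` in the normalisation of `lowerQuantMass`, that is
`J̃ ^ (d * p / (d + p))`. -/
def cubeQuantMass (p : ℝ) (d : ℕ) : ℝ≥0∞ :=
  lowerQuantMass p (p / d) (unifCube d)

lemma cubeQuantMass_rpow_le (hp : 0 ≤ p) (hd : 0 < d) {s : ℝ≥0} (hs : s ≠ 0) :
    cubeQuantMass p d ^ (1 + p / d) ≤ (s : ℝ≥0∞) ^ (p / d) * quantEnergy p s (unifCube d) := by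
  have hle := upperQuantMass_volume_restrict_rpow_le hp hd isCompact_unitCube
    (volume_unitCube.trans_ne one_ne_zero) hs
  rw [volume_unitCube, ENNReal.one_rpow, one_mul] at hle
  refine le_trans ?_ hle
  gcongr
  exact lowerQuantMass_le_upperQuantMass (by positivity) _

lemma cubeQuantMass_ne_top (hp : 0 ≤ p) (hd : 0 < d) : cubeQuantMass p d ≠ ∞ := by
  have hv : volume (unitCube d) < ((2 : ℝ≥0) : ℝ≥0∞) := by
    rw [volume_unitCube]; norm_num
  have hle := upperQuantMass_restrict_le_of_lt hp hd isCompact_unitCube hv (unifCube d)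
  rw [unifCube_eq, Measure.restrict_restrict isCompact_unitCube.measurableSet, Set.inter_self,
    Measure.restrict_apply_univ, volume_unitCube] at hle
  refine ne_top_of_le_ne_top (fun htop => ?_) (lowerQuantMass_le_upperQuantMass (by positivity) _)
  rw [unifCube_eq] at htop
  rw [htop, ENNReal.top_rpow_of_pos (by positivity), top_le_iff] at hle
  exact ENNReal.mul_ne_top (by simp) (by simp [hp]) hle

lemma upperQuantMass_volume_restrict_le_of_isCompact (hp : 0 < p) (hd : 0 < d) {K : Set (Euc d)}
    (hK : IsCompact K) :
    upperQuantMass p (p / d) (volume.restrict K) ≤ cubeQuantMass p d * volume K := by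
  have hr : 0 < p / d := by positivity
  by_cases hK0 : volume K = 0
  · have := isFiniteMeasure_restrict (μ := volume).2 hK.measure_lt_top.ne
    have hzero := upperQuantMass_restrict_eq_zero hp hd hK hK0 (volume.restrict K)
    rw [Measure.restrict_restrict hK.measurableSet, Set.inter_self] at hzero
    simp [hzero]
  have hle : upperQuantMass p (p / d) (volume.restrict K) ^ (1 + p / d) ≤
      (volume K * cubeQuantMass p d) ^ (1 + p / d) := by
    rw [ENNReal.mul_rpow_of_nonneg _ _ (by positivity), cubeQuantMass, lowerQuantMass_rpow hr.le,
      ← ENNReal.liminf_const_mul_of_ne_top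
        (ENNReal.rpow_ne_top_of_nonneg (by positivity) hK.measure_lt_top.ne)]
    refine le_liminf_of_le (by isBoundedDefault) ?_
    filter_upwards [eventually_ne_atTop 0] with s hs
    exact upperQuantMass_volume_restrict_rpow_le hp.le hd hK hK0 hs
  rw [mul_comm]
  exact (ENNReal.rpow_le_rpow_iff (by positivity)).1 hle

end Covering

section Pierce

variable {d : ℕ} {p η : ℝ}

lemma exists_forall_infEDist_le_of_subset_biUnion_gridCube {l : ℝ≥0} {K : Set (Euc d)}
    {S : Finset (Fin d → ℤ)} (hS : K ⊆ ⋃ z ∈ S, gridCube l z) :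
    ∃ G : Finset (Euc d), G.card ≤ S.card ∧
      ∀ y ∈ K, Metric.infEDist y G ≤ (NNReal.sqrt d * l : ℝ≥0) := by
  classical
  choose! c hc using fun (z : Fin d → ℤ) (hz : (gridCube l z).Nonempty) => hz
  refine ⟨S.image c, Finset.card_image_le, fun y hy => ?_⟩
  obtain ⟨z, hz, hyz⟩ := Set.mem_iUnion₂.1 (hS hy)
  have hcz : c z ∈ (↑(S.image c) : Set (Euc d)) := by simpa using ⟨z, hz, rfl⟩
  exact (Metric.infEDist_le_edist_of_mem hcz).trans
    (by simpa using edist_le_of_mem_gridCube hyz (hc z ⟨y, hyz⟩))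

lemma exists_infEDist_unitBall_le (hd : 0 < d) : ∃ C : ℝ≥0, ∀ t : ℝ≥0, t ≠ 0 →
    ∃ G : Finset (Euc d), G.card ≤ t ∧ ∀ y : Euc d, ‖y‖₊ ≤ 1 →
      Metric.infEDist y (insert 0 ↑G) ≤ (C * t⁻¹ ^ (d : ℝ)⁻¹ : ℝ≥0) := by
  have hball : IsCompact (Metric.closedBall (0 : Euc d) 1) := isCompact_closedBall 0 1
  obtain ⟨v, hv, -⟩ := ENNReal.lt_iff_exists_nnreal_btwn.1 (hball.measure_lt_top (μ := volume))
  obtain ⟨t₀, ht₀⟩ := (eventually_exists_gridCube_cover hd hball hv).exists_forall_of_atTop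
  refine ⟨max (NNReal.sqrt d * v ^ (d : ℝ)⁻¹) (t₀ ^ (d : ℝ)⁻¹), fun t ht => ?_⟩
  rcases le_total t₀ t with hle | hle
  · obtain ⟨S, hcover, hS⟩ := ht₀ t hle
    obtain ⟨G, hG, hdist⟩ := exists_forall_infEDist_le_of_subset_biUnion_gridCube hcover
    refine ⟨G, (Nat.cast_le.2 hG).trans hS, fun y hy => ?_⟩
    refine (Metric.infEDist_anti (Set.subset_insert _ _)).trans ((hdist y ?_).trans ?_)
    · simpa using NNReal.coe_le_coe.2 hy
    rw [div_eq_mul_inv, NNReal.mul_rpow, ← mul_assoc]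
    gcongr
    exact le_max_left _ _
  · refine ⟨∅, by simp, fun y hy => ?_⟩
    have hone : 1 ≤ t₀ ^ (d : ℝ)⁻¹ * t⁻¹ ^ (d : ℝ)⁻¹ := by
      rw [← NNReal.mul_rpow, ← div_eq_mul_inv]
      exact NNReal.one_le_rpow ((one_le_div (pos_iff_ne_zero.2 ht)).2 hle) (by positivity)
    rw [Finset.coe_empty, insert_empty_eq, Metric.infEDist_singleton, edist_zero_right,
      enorm_eq_nnnorm, ENNReal.coe_le_coe]
    exact hy.trans (hone.trans (by gcongr; exact le_max_right _ _))

lemma exists_infEDist_ball_le (hd : 0 < d) : ∃ C : ℝ≥0, ∀ R t : ℝ≥0, R ≠ 0 → t ≠ 0 →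
    ∃ G : Finset (Euc d), G.card ≤ t ∧ ∀ y : Euc d, ‖y‖₊ ≤ R →
      Metric.infEDist y (insert 0 ↑G) ≤ (C * R * t⁻¹ ^ (d : ℝ)⁻¹ : ℝ≥0) := by
  classical
  obtain ⟨C, hC⟩ := exists_infEDist_unitBall_le hd
  refine ⟨C, fun R t hR ht => ?_⟩
  obtain ⟨G, hG, hdist⟩ := hC t ht
  refine ⟨G.image (R • ·), (Nat.cast_le.2 Finset.card_image_le).trans hG, fun y hy => ?_⟩
  have hlip : LipschitzWith R (fun z : Euc d => R • z) := by
    simpa [NNReal.smul_def] using lipschitzWith_smul (R : ℝ)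
  have hle := infEDist_image_le_of_lipschitzWith hlip hR (R⁻¹ • y) (insert 0 ↑G)
  rw [Set.image_insert_eq, smul_zero, smul_inv_smul₀ hR, ← Finset.coe_image] at hle
  refine hle.trans ?_
  have hy' : ‖R⁻¹ • y‖₊ ≤ 1 := by
    rw [NNReal.smul_def, nnnorm_smul, NNReal.nnnorm_eq]
    exact inv_mul_le_one_of_le₀ hy zero_le
  rw [mul_comm C, mul_assoc, ENNReal.coe_mul]
  gcongr
  exact hdist _ hy'

-- All but finitely many of the sets are empty.
lemma exists_finset_insert_subset_of_card_le_geometric {α : Type*} (a : α) {G : ℕ → Finset α}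
    {x ρ : ℝ≥0} (hx : 1 ≤ x) (hρ : ρ < 1) (hG : ∀ k, (G k).card ≤ x * ρ ^ k) :
    ∃ Γ : Finset α, Γ.card ≤ (1 + ∑' k, ρ ^ k) * x ∧ ∀ k, insert a ↑(G k) ⊆ (Γ : Set α) := by
  classical
  obtain ⟨K, hK⟩ : ∃ K, ∀ k ≥ K, G k = ∅ := by
    have hlim : Tendsto (fun k => x * ρ ^ k) atTop (𝓝 0) := by
      simpa using (NNReal.tendsto_pow_atTop_nhds_zero_of_lt_one hρ).const_mul x
    obtain ⟨K, hK⟩ := (hlim.eventually (gt_mem_nhds one_pos)).exists_forall_of_atTop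
    exact ⟨K, fun k hk => by simpa using (hG k).trans_lt (hK k hk)⟩
  refine ⟨insert a ((Finset.range K).biUnion G), ?_, fun k => ?_⟩
  · have hcard : (insert a ((Finset.range K).biUnion G)).card ≤
        1 + ∑ k ∈ Finset.range K, (G k).card := by
      rw [add_comm]
      exact (Finset.card_insert_le _ _).trans (by gcongr; exact Finset.card_biUnion_le)
    calc ((insert a ((Finset.range K).biUnion G)).card : ℝ≥0)
        ≤ 1 + ∑ k ∈ Finset.range K, ((G k).card : ℝ≥0) := by exact_mod_cast hcard
      _ ≤ x + ∑ k ∈ Finset.range K, x * ρ ^ k := add_le_add hx (Finset.sum_le_sum fun k _ => hG k)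
      _ ≤ x + x * ∑' k, ρ ^ k := by
        rw [← Finset.mul_sum]
        gcongr
        exact (NNReal.summable_geometric hρ).sum_le_tsum _ fun _ _ => zero_le
      _ = (1 + ∑' k, ρ ^ k) * x := by ring
  · rw [← Finset.coe_insert, Finset.coe_subset]
    refine Finset.insert_subset_insert _ ?_
    rcases lt_or_ge k K with hk | hk
    · exact Finset.subset_biUnion_of_mem G (Finset.mem_range.2 hk)
    · simp [hK k hk]

-- The ball of radius `2 ^ k` receives `x * ρ ^ k` points.
lemma exists_infEDist_le_rpow_nnnorm (hd : 0 < d) {β : ℝ} (hβ : 0 < β) :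
    ∃ C s : ℝ≥0, s ≠ 0 ∧ ∀ x : ℝ≥0, 1 ≤ x → ∃ Γ : Finset (Euc d), Γ.card ≤ s * x ∧ ∀ y : Euc d,
      Metric.infEDist y Γ ≤ (C * x⁻¹ ^ (d : ℝ)⁻¹ * max 1 ‖y‖₊ ^ (1 + β) : ℝ≥0) := by
  obtain ⟨C, hC⟩ := exists_infEDist_ball_le hd
  set ρ : ℝ≥0 := (2 ^ (β * d))⁻¹ with hρ
  have hρ0 : ρ ≠ 0 := by positivity
  have hρ1 : ρ < 1 := inv_lt_one_of_one_lt₀ (NNReal.one_lt_rpow one_lt_two (by positivity))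
  have herr : ∀ (x : ℝ≥0) (k : ℕ), C * 2 ^ k * (x * ρ ^ k)⁻¹ ^ (d : ℝ)⁻¹ =
      C * x⁻¹ ^ (d : ℝ)⁻¹ * (2 ^ k) ^ (1 + β) := fun x k => by
    have hpow : ((ρ ^ k)⁻¹ : ℝ≥0) = ((2 ^ k) ^ β) ^ (d : ℝ) := by
      rw [hρ, inv_pow, inv_inv, ← NNReal.rpow_mul, ← NNReal.rpow_natCast, ← NNReal.rpow_natCast,
        ← NNReal.rpow_mul, ← NNReal.rpow_mul, mul_comm]
    rw [mul_inv, NNReal.mul_rpow, hpow, NNReal.rpow_rpow_inv (by positivity),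
      NNReal.rpow_add (by simp), NNReal.rpow_one]
    ring
  refine ⟨C * 2 ^ (1 + β), 1 + ∑' k, ρ ^ k, by positivity, fun x hx => ?_⟩
  have hx0 : x ≠ 0 := (one_pos.trans_le hx).ne'
  choose G hG hdist using fun k : ℕ => hC (2 ^ k) (x * ρ ^ k) (by simp) (by simp [hx0, hρ0])
  obtain ⟨Γ, hΓ, hGΓ⟩ := exists_finset_insert_subset_of_card_le_geometric 0 hx hρ1 hG
  refine ⟨Γ, hΓ, fun y => ?_⟩
  obtain ⟨k, hk, hk'⟩ := exists_nat_pow_near (le_max_left 1 ‖y‖₊) one_lt_two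
  refine (Metric.infEDist_anti (hGΓ (k + 1))).trans
    ((hdist (k + 1) y ((le_max_right _ _).trans hk'.le)).trans (ENNReal.coe_le_coe.2 ?_))
  calc C * 2 ^ (k + 1) * (x * ρ ^ (k + 1))⁻¹ ^ (d : ℝ)⁻¹
      = C * x⁻¹ ^ (d : ℝ)⁻¹ * (2 * 2 ^ k) ^ (1 + β) := by rw [herr, pow_succ']
    _ ≤ C * x⁻¹ ^ (d : ℝ)⁻¹ * (2 * max 1 ‖y‖₊) ^ (1 + β) := by gcongr
    _ = _ := by rw [NNReal.mul_rpow]; ring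

/-- The `t`-th absolute moment of `μ`, plus its mass. -/
def momentMass {E : Type*} [NormedAddCommGroup E] [MeasurableSpace E] (t : ℝ) (μ : Measure E) :
    ℝ≥0∞ :=
  ∫⁻ y, 1 + ‖y‖ₑ ^ t ∂μ

lemma momentMass_mono {E : Type*} [NormedAddCommGroup E] [MeasurableSpace E] {μ ν : Measure E}
    {t : ℝ} (hμν : μ ≤ ν) : momentMass t μ ≤ momentMass t ν :=
  lintegral_mono' hμν le_rfl

lemma isFiniteMeasure_of_momentMass_ne_top {E : Type*} [NormedAddCommGroup E] [MeasurableSpace E]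
    {μ : Measure E} {t : ℝ} (hμ : momentMass t μ ≠ ∞) : IsFiniteMeasure μ := by
  refine ⟨lt_of_le_of_lt ?_ hμ.lt_top⟩
  rw [← lintegral_one]
  exact lintegral_mono fun y => le_self_add

lemma exists_forall_rpow_mul_quantEnergy_le_momentMass (hd : 0 < d) (hp : 0 < p) (hη : 0 < η) :
    ∃ C s : ℝ≥0, s ≠ 0 ∧ ∀ (μ : Measure (Euc d)) (x : ℝ≥0), 1 ≤ x →
      (x : ℝ≥0∞) ^ (p / d) * quantEnergy p (s * x) μ ≤ C * momentMass (p + η) μ := by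
  obtain ⟨C, s, hs, hnet⟩ := exists_infEDist_le_rpow_nnnorm hd (div_pos hη hp)
  refine ⟨C ^ p, s, hs, fun μ x hx => ?_⟩
  have hx0 : x ≠ 0 := (one_pos.trans_le hx).ne'
  obtain ⟨Γ, hΓ, hdist⟩ := hnet x hx
  have hmax : ∀ y : Euc d, (max 1 ‖y‖₊ : ℝ≥0) ^ (p + η) ≤ 1 + ‖y‖₊ ^ (p + η) := fun y => by
    rcases le_total 1 ‖y‖₊ with h | h <;> simp [h]
  have hpow : ∀ y : Euc d, x ^ (p / d) *
      (C * x⁻¹ ^ (d : ℝ)⁻¹ * max 1 ‖y‖₊ ^ (1 + η / p)) ^ p ≤ C ^ p * (1 + ‖y‖₊ ^ (p + η)) := by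
    intro y
    have hx1 : x ^ (p / d) * (x⁻¹ ^ (d : ℝ)⁻¹) ^ p = 1 := by
      rw [← NNReal.rpow_mul, inv_mul_eq_div, ← NNReal.mul_rpow, mul_inv_cancel₀ hx0,
        NNReal.one_rpow]
    have hexp : (1 + η / p) * p = p + η := by field_simp
    calc x ^ (p / d) * (C * x⁻¹ ^ (d : ℝ)⁻¹ * max 1 ‖y‖₊ ^ (1 + η / p)) ^ p
        = C ^ p * max 1 ‖y‖₊ ^ (p + η) * (x ^ (p / d) * (x⁻¹ ^ (d : ℝ)⁻¹) ^ p) := by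
          rw [NNReal.mul_rpow, NNReal.mul_rpow, ← NNReal.rpow_mul (max 1 ‖y‖₊), hexp]; ring
      _ ≤ C ^ p * (1 + ‖y‖₊ ^ (p + η)) := by rw [hx1, mul_one]; gcongr; exact hmax y
  calc (x : ℝ≥0∞) ^ (p / d) * quantEnergy p (s * x) μ
      ≤ (x : ℝ≥0∞) ^ (p / d) * ∫⁻ y, Metric.infEDist y (Γ : Set (Euc d)) ^ p ∂μ := by
        gcongr; exact quantEnergy_le hΓ μ
    _ = ∫⁻ y, (x : ℝ≥0∞) ^ (p / d) * Metric.infEDist y (Γ : Set (Euc d)) ^ p ∂μ :=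
        (lintegral_const_mul _ (measurable_infEDist.pow_const p)).symm
    _ ≤ ∫⁻ y, (C ^ p : ℝ≥0) * (1 + ‖y‖ₑ ^ (p + η)) ∂μ := lintegral_mono fun y => by
        refine (mul_le_mul_right (ENNReal.rpow_le_rpow (hdist y) hp.le) _).trans ?_
        rw [← ENNReal.coe_rpow_of_ne_zero hx0, ← ENNReal.coe_rpow_of_nonneg _ hp.le,
          enorm_eq_nnnorm, ← ENNReal.coe_rpow_of_nonneg _ (by positivity)]
        exact_mod_cast hpow y
    _ = (C ^ p : ℝ≥0) * momentMass (p + η) μ := lintegral_const_mul' _ _ ENNReal.coe_ne_top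

-- Pierce's lemma.
lemma exists_forall_upperQuantMass_le_momentMass (hd : 0 < d) (hp : 0 < p) (hη : 0 < η) :
    ∃ C : ℝ≥0, ∀ μ : Measure (Euc d),
      upperQuantMass p (p / d) μ ≤ C * momentMass (p + η) μ ^ (1 + p / d)⁻¹ := by
  obtain ⟨C, s, hs, hle⟩ := exists_forall_rpow_mul_quantEnergy_le_momentMass hd hp hη
  have hr : 0 ≤ p / d := by positivity
  refine ⟨(s ^ (p / d) * C) ^ (1 + p / d)⁻¹, fun μ => ?_⟩
  rw [ENNReal.coe_rpow_of_nonneg _ (by positivity),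
    ← ENNReal.mul_rpow_of_nonneg _ _ (by positivity), ENNReal.le_rpow_inv_iff (by positivity),
    ENNReal.coe_mul, ENNReal.coe_rpow_of_nonneg _ hr, mul_assoc]
  refine le_rpow_mul_of_rpow_neg_mul_le hs ?_
  rw [← limsup_rpow_mul_quantEnergy_mul hr hs]
  exact limsup_le_of_le (by isBoundedDefault) ((eventually_ge_atTop 1).mono (hle μ))

end Pierce

section Tightness

variable {d : ℕ} {p η : ℝ} {μ ν : Measure (Euc d)}

lemma exists_forall_upperQuantMass_le_of_momentMass_le (hd : 0 < d) (hp : 0 < p) (hη : 0 < η)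
    {ε : ℝ≥0∞} (hε : ε ≠ 0) :
    ∃ δ : ℝ≥0∞, δ ≠ 0 ∧ ∀ μ : Measure (Euc d),
      momentMass (p + η) μ ≤ δ → upperQuantMass p (p / d) μ ≤ ε := by
  have hr : 0 < 1 + p / d := by positivity
  obtain ⟨C, hC⟩ := exists_forall_upperQuantMass_le_momentMass hd hp hη
  have h0 : ε / C ≠ 0 := ENNReal.div_ne_zero.2 ⟨hε, ENNReal.coe_ne_top⟩
  refine ⟨(ε / C) ^ (1 + p / d), mt (ENNReal.rpow_eq_zero_iff_of_pos hr).1 h0, fun μ hμ => ?_⟩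
  calc upperQuantMass p (p / d) μ
      ≤ C * momentMass (p + η) μ ^ (1 + p / d)⁻¹ := hC μ
    _ ≤ C * (ε / C) := by gcongr; exact (ENNReal.rpow_inv_le_iff hr).2 hμ
    _ ≤ ε := ENNReal.mul_div_le

lemma exists_isCompact_upperQuantMass_restrict_compl_le (hd : 0 < d) (hp : 0 < p) (hη : 0 < η)
    (hμ : momentMass (p + η) μ ≠ ∞) {A : Set (Euc d)} (hA : MeasurableSet A) (hμA : μ Aᶜ = 0)
    {ε : ℝ≥0∞} (hε : ε ≠ 0) :
    ∃ K ⊆ A, IsCompact K ∧ upperQuantMass p (p / d) (μ.restrict Kᶜ) ≤ ε := by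
  obtain ⟨δ, hδ, hle⟩ := exists_forall_upperQuantMass_le_of_momentMass_le hd hp hη hε
  set ρ : Measure (Euc d) := μ.withDensity fun y => 1 + ‖y‖ₑ ^ (p + η)
  have : IsFiniteMeasure ρ := isFiniteMeasure_withDensity hμ
  obtain ⟨K, hKA, hK, hρK⟩ := hA.exists_isCompact_sdiff_lt (measure_ne_top ρ A) hδ
  refine ⟨K, hKA, hK, hle _ ?_⟩
  calc momentMass (p + η) (μ.restrict Kᶜ) = ρ Kᶜ :=
        (withDensity_apply _ hK.measurableSet.compl).symm
    _ ≤ ρ (A \ K ∪ Aᶜ) := measure_mono fun y hy => by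
        by_cases hyA : y ∈ A
        · exact .inl ⟨hyA, hy⟩
        · exact .inr hyA
    _ ≤ ρ (A \ K) + ρ Aᶜ := measure_union_le _ _
    _ = ρ (A \ K) := by rw [withDensity_absolutelyContinuous μ _ hμA, add_zero]
    _ ≤ δ := hρK.le

lemma lowerQuantMass_add_le_of_mutuallySingular (hd : 0 < d) (hp : 0 < p) (hη : 0 < η)
    (hμ : momentMass (p + η) μ ≠ ∞) (hν : momentMass (p + η) ν ≠ ∞)
    (hμν : μ.MutuallySingular ν) :
    lowerQuantMass p (p / d) μ + lowerQuantMass p (p / d) ν ≤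
      lowerQuantMass p (p / d) (μ + ν) := by
  have hr : 0 ≤ p / d := by positivity
  have hsplit : ∀ (ρ : Measure (Euc d)) {K : Set (Euc d)} {ε : ℝ≥0∞}, IsCompact K →
      upperQuantMass p (p / d) (ρ.restrict Kᶜ) ≤ ε →
      lowerQuantMass p (p / d) ρ ≤ lowerQuantMass p (p / d) (ρ.restrict K) + ε := by
    intro ρ K ε hK hε
    conv_lhs => rw [← Measure.restrict_add_restrict_compl (μ := ρ) hK.measurableSet]
    exact (lowerQuantMass_add_le hp.le hr _ _).trans (add_le_add_right hε _)
  obtain ⟨s, hs, hμs, hνs⟩ := hμν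
  refine ENNReal.le_of_forall_pos_le_add fun ε hε _ => ?_
  have hε2 : ((ε / 2 : ℝ≥0) : ℝ≥0∞) ≠ 0 := by simp [hε.ne']
  obtain ⟨K, hKs, hK, hμK⟩ := exists_isCompact_upperQuantMass_restrict_compl_le hd hp hη hμ
    hs.compl (by rwa [compl_compl]) hε2
  obtain ⟨L, hLs, hL, hνL⟩ :=
    exists_isCompact_upperQuantMass_restrict_compl_le hd hp hη hν hs hνs hε2
  have hKL : Disjoint K L := (disjoint_compl_left (a := s)).mono hKs hLs
  calc lowerQuantMass p (p / d) μ + lowerQuantMass p (p / d) ν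
      ≤ (lowerQuantMass p (p / d) (μ.restrict K) + (ε / 2 : ℝ≥0)) +
          (lowerQuantMass p (p / d) (ν.restrict L) + (ε / 2 : ℝ≥0)) :=
        add_le_add (hsplit μ hK hμK) (hsplit ν hL hνL)
    _ = lowerQuantMass p (p / d) (μ.restrict K) + lowerQuantMass p (p / d) (ν.restrict L) + ε := by
        rw [add_add_add_comm, ← ENNReal.coe_add, add_halves]
    _ ≤ lowerQuantMass p (p / d) (μ.restrict K + ν.restrict L) + ε := by
        gcongr; exact lowerQuantMass_restrict_add_le hp.le hr hK hL hKL μ ν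
    _ ≤ lowerQuantMass p (p / d) (μ + ν) + ε := by
        gcongr
        exact lowerQuantMass_mono hr
          (add_le_add Measure.restrict_le_self Measure.restrict_le_self)

lemma upperQuantMass_eq_zero_of_mutuallySingular (hd : 0 < d) (hp : 0 < p) (hη : 0 < η)
    (hν : momentMass (p + η) ν ≠ ∞) (hsing : ν.MutuallySingular volume) :
    upperQuantMass p (p / d) ν = 0 := by
  have := isFiniteMeasure_of_momentMass_ne_top hν
  obtain ⟨s, hs, hνs, hvol⟩ := hsing
  refine le_zero_iff.1 (le_of_forall_gt fun ε hε => ?_)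
  obtain ⟨δ, hδ0, hδε⟩ := exists_between hε
  obtain ⟨K, hKs, hK, hνK⟩ := exists_isCompact_upperQuantMass_restrict_compl_le hd hp hη hν
    hs.compl (by rwa [compl_compl]) hδ0.ne'
  rw [← Measure.restrict_add_restrict_compl (μ := ν) hK.measurableSet]
  refine (upperQuantMass_add_le hp.le (by positivity) _ _).trans_lt ?_
  rw [upperQuantMass_restrict_eq_zero hp hd hK (measure_mono_null hKs hvol) ν, zero_add]
  exact hνK.trans_lt hδε

end Tightness

section QuantErr

variable {d : ℕ} {p : ℝ} {μ : Measure (Euc d)}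

lemma lintegral_infEDist_rpow_ne_top [IsFiniteMeasure μ] (hp : 0 < p)
    (hμ : MemLp id (ENNReal.ofReal p) μ) {Γ : Finset (Euc d)} (hΓ : Γ.Nonempty) :
    ∫⁻ y, Metric.infEDist y (Γ : Set (Euc d)) ^ p ∂μ ≠ ∞ := by
  obtain ⟨a, ha⟩ := hΓ
  have hfin := lintegral_rpow_enorm_lt_top_of_eLpNorm_lt_top (by simpa) ENNReal.ofReal_ne_top
    (hμ.sub (memLp_const a)).eLpNorm_lt_top
  rw [ENNReal.toReal_ofReal hp.le] at hfin
  refine (lt_of_le_of_lt (lintegral_mono fun y => ?_) hfin).ne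
  exact ENNReal.rpow_le_rpow
    ((Metric.infEDist_le_edist_of_mem (by simpa)).trans_eq (edist_eq_enorm_sub y a)) hp.le

lemma ofReal_quantErrM_rpow [IsFiniteMeasure μ] (hp : 0 < p)
    (hμ : MemLp id (ENNReal.ofReal p) μ) {Γ : Finset (Euc d)} (hΓ : Γ.Nonempty) :
    ENNReal.ofReal (quantErrM p μ Γ) ^ p =
      ∫⁻ y, Metric.infEDist y (Γ : Set (Euc d)) ^ p ∂μ := by
  have hint : ∫ y, Metric.infDist y (Γ : Set (Euc d)) ^ p ∂μ =
      (∫⁻ y, Metric.infEDist y (Γ : Set (Euc d)) ^ p ∂μ).toReal := by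
    simp only [Metric.infDist, ENNReal.toReal_rpow]
    refine integral_toReal (measurable_infEDist.pow_const p).aemeasurable (.of_forall fun y => ?_)
    exact ENNReal.rpow_lt_top_of_nonneg hp.le (Metric.infEDist_ne_top (by simpa))
  rw [quantErrM, hint, one_div, ENNReal.toReal_rpow,
    ENNReal.ofReal_toReal (by simp [lintegral_infEDist_rpow_ne_top hp hμ hΓ, hp.le]),
    ENNReal.rpow_inv_rpow hp.ne']

lemma ofReal_sInf_rpow (hp : 0 < p) {S : Set ℝ} (hS : S.Nonempty) :
    ENNReal.ofReal (sInf S) ^ p = ⨅ e : S, ENNReal.ofReal e ^ p := by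
  have := hS.to_subtype
  rw [sInf_eq_iInf', ENNReal.ofReal_iInf]
  exact (ENNReal.orderIsoRpow p hp).map_iInf _

lemma ofReal_optQuantErrM_rpow [IsFiniteMeasure μ] (hp : 0 < p)
    (hμ : MemLp id (ENNReal.ofReal p) μ) {N : ℕ} (hN : 1 ≤ N) :
    ENNReal.ofReal (optQuantErrM p N μ) ^ p = quantEnergy p N μ := by
  rw [optQuantErrM, ofReal_sInf_rpow hp (by exact ⟨_, {0}, by simp, by simpa, rfl⟩)]
  apply le_antisymm
  · rw [le_quantEnergy_iff]
    intro Γ hΓN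
    obtain ⟨Δ, hΓΔ, hΔ, hΔN⟩ : ∃ Δ : Finset (Euc d), Γ ⊆ Δ ∧ Δ.Nonempty ∧ Δ.card ≤ N := by
      rcases Γ.eq_empty_or_nonempty with rfl | hΓ
      · exact ⟨{0}, by simp, by simp, by simpa⟩
      · exact ⟨Γ, subset_rfl, hΓ, by exact_mod_cast hΓN⟩
    refine (iInf_le _ ⟨quantErrM p μ Δ, Δ, hΔ, hΔN, rfl⟩).trans ?_
    rw [ofReal_quantErrM_rpow hp hμ hΔ]
    gcongr
  · refine le_iInf ?_
    rintro ⟨_, Γ, hΓ, hΓN, rfl⟩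
    rw [ofReal_quantErrM_rpow hp hμ hΓ]
    exact quantEnergy_le (by exact_mod_cast hΓN) μ

lemma ofReal_rpow_mul_optQuantErrM_rpow [IsFiniteMeasure μ] (hp : 0 < p)
    (hμ : MemLp id (ENNReal.ofReal p) μ) {N : ℕ} (hN : 1 ≤ N) :
    ENNReal.ofReal ((N : ℝ) ^ (1 / (d : ℝ)) * optQuantErrM p N μ) ^ p =
      (N : ℝ≥0∞) ^ (p / d) * quantEnergy p N μ := by
  rw [ENNReal.ofReal_mul (by positivity), ENNReal.mul_rpow_of_nonneg _ _ hp.le,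
    ofReal_optQuantErrM_rpow hp hμ hN, ← ENNReal.ofReal_rpow_of_nonneg (by positivity)
    (by positivity), ENNReal.ofReal_natCast, ← ENNReal.rpow_mul, one_div_mul_eq_div]

end QuantErr

section Constant

lemma rpow_mul_sub_le_quantEnergy {E : Type*} [NormedAddCommGroup E] [NormedSpace ℝ E]
    [MeasurableSpace E] [BorelSpace E] [FiniteDimensional ℝ E] {p : ℝ} (hp : 0 < p)
    {μ ν : Measure E} [ν.IsAddHaarMeasure] (hμν : μ ≤ ν) {ρ : ℝ≥0} (hρ : ρ ≠ 0) (x : ℝ≥0) :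
    (ρ : ℝ≥0∞) ^ p *
        (μ Set.univ - x * ((ρ : ℝ≥0∞) ^ Module.finrank ℝ E * ν (Metric.ball 0 1))) ≤
      quantEnergy p x μ := by
  rw [le_quantEnergy_iff]
  intro Γ hΓ
  have hcover : {y | ¬ (ρ : ℝ≥0∞) ^ p ≤ Metric.infEDist y (Γ : Set E) ^ p} ⊆
      ⋃ a ∈ Γ, Metric.ball a ρ := by
    intro y hy
    rw [Set.mem_ofPred_eq, not_le, ENNReal.rpow_lt_rpow_iff hp, Metric.infEDist_lt_iff] at hy
    obtain ⟨a, ha, hya⟩ := hy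
    exact Set.mem_iUnion₂.2 ⟨a, by simpa using ha, by rwa [← Metric.eball_coe]⟩
  have hball : μ (⋃ a ∈ Γ, Metric.ball a ρ) ≤
      x * ((ρ : ℝ≥0∞) ^ Module.finrank ℝ E * ν (Metric.ball 0 1)) := by
    calc μ (⋃ a ∈ Γ, Metric.ball a ρ) ≤ ∑ a ∈ Γ, ν (Metric.ball a ρ) :=
          (hμν _).trans (measure_biUnion_finset_le _ _)
      _ = (Γ.card : ℝ≥0) * ((ρ : ℝ≥0∞) ^ Module.finrank ℝ E * ν (Metric.ball 0 1)) := by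
          simp [Measure.addHaar_ball_of_pos ν _ (NNReal.coe_pos.2 (pos_iff_ne_zero.2 hρ)),
            ENNReal.ofReal_pow]
      _ ≤ _ := by gcongr
  refine le_trans (mul_le_mul_right ?_ _)
    (mul_meas_ge_le_lintegral (measurable_infEDist.pow_const p) _)
  rw [tsub_le_iff_right]
  calc μ Set.univ ≤ _ := measure_univ_le_add_compl {y | (ρ : ℝ≥0∞) ^ p ≤ Metric.infEDist y Γ ^ p}
    _ ≤ _ := by gcongr; exact (measure_mono hcover).trans hball

variable {d : ℕ} {p : ℝ}

lemma cubeQuantMass_ne_zero (hp : 0 < p) (hd : 0 < d) : cubeQuantMass p d ≠ 0 := by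
  lift volume (Metric.ball (0 : Euc d) 1) to ℝ≥0 using measure_ball_lt_top.ne with ω hω
  have hω0 : ω ≠ 0 := by
    rintro rfl
    exact (Metric.measure_ball_pos volume (0 : Euc d) one_pos).ne hω
  set v : ℝ≥0 := (2 * ω)⁻¹ with hv
  have hv0 : v ≠ 0 := by simp [hv, hω0]
  have hle : (v : ℝ≥0∞) ^ (p / d) * 2⁻¹ ≤ cubeQuantMass p d ^ (1 + p / d) := by
    rw [cubeQuantMass, lowerQuantMass_rpow (by positivity)]
    refine le_liminf_of_le (by isBoundedDefault) ?_
    filter_upwards [eventually_ne_atTop 0] with x hx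
    set ρ : ℝ≥0 := (v / x) ^ (d : ℝ)⁻¹ with hρ
    have hρ0 : ρ ≠ 0 := by
      simp [hρ, NNReal.rpow_eq_zero_iff, hv0, hx]
    have hρd : x * (ρ ^ d * ω) = 2⁻¹ := by
      rw [hρ, NNReal.rpow_inv_natCast_pow _ hd.ne', hv]
      field_simp
    have hlow := rpow_mul_sub_le_quantEnergy (μ := unifCube d) hp
      Measure.restrict_le_self hρ0 x
    rw [finrank_euclideanSpace_fin, ← hω, measure_univ, ← ENNReal.coe_pow, ← ENNReal.coe_mul,
      ← ENNReal.coe_mul, hρd, ENNReal.coe_inv two_ne_zero, ENNReal.coe_ofNat,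
      ENNReal.one_sub_inv_two] at hlow
    rw [← rpow_mul_rpow_div_rpow_inv hp.le d v hx, mul_assoc]
    gcongr
  intro h0
  rw [h0, ENNReal.zero_rpow_of_pos (by positivity)] at hle
  simp [hv0] at hle

lemma iInf_le_rpow_mul_quantEnergy {r : ℝ} (hr : 0 ≤ r) {x : ℝ≥0} (hx : 1 ≤ x)
    (μ : Measure (Euc d)) :
    ⨅ N : {N : ℕ // 1 ≤ N}, ((N : ℕ) : ℝ≥0∞) ^ r * quantEnergy p N μ ≤
      (x : ℝ≥0∞) ^ r * quantEnergy p x μ := by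
  refine (iInf_le _ ⟨⌊x⌋₊, Nat.le_floor (by simpa)⟩).trans ?_
  gcongr
  · exact_mod_cast Nat.floor_le (zero_le : 0 ≤ x)
  · rw [le_quantEnergy_iff]
    exact fun Γ hΓ => quantEnergy_le (by exact_mod_cast Nat.le_floor hΓ) μ

lemma memLp_id_unifCube (q : ℝ≥0∞) : MemLp id q (unifCube d) := by
  obtain ⟨R, hR⟩ := (isCompact_unitCube (d := d)).isBounded.exists_norm_le
  exact MemLp.of_bound aestronglyMeasurable_id R
    (ae_restrict_of_forall_mem isCompact_unitCube.measurableSet hR)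

lemma ofReal_zadorConst_rpow (hp : 0 < p) (hd : 0 < d) :
    ENNReal.ofReal (zadorConst p d) ^ p = cubeQuantMass p d ^ (1 + p / d) := by
  have hr : 0 ≤ p / d := by positivity
  have herr {N : ℕ} (hN : 1 ≤ N) :=
    ofReal_rpow_mul_optQuantErrM_rpow hp (memLp_id_unifCube (d := d) _) hN
  rw [zadorConst, ofReal_sInf_rpow hp (by exact ⟨_, 1, le_rfl, rfl⟩)]
  apply le_antisymm
  · rw [cubeQuantMass, lowerQuantMass_rpow hr]
    refine le_liminf_of_le (by isBoundedDefault) ?_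
    filter_upwards [eventually_ge_atTop 1] with x hx
    refine le_trans (le_iInf fun N => ?_) (iInf_le_rpow_mul_quantEnergy hr hx _)
    exact iInf_le_of_le ⟨_, N, N.2, rfl⟩ (herr N.2).le
  · refine le_iInf ?_
    rintro ⟨_, N, hN, rfl⟩
    rw [herr hN]
    simpa only [ENNReal.coe_natCast] using
      cubeQuantMass_rpow_le hp.le hd (s := N) (by positivity)

lemma zadorConst_pos (hp : 0 < p) (hd : 0 < d) : 0 < zadorConst p d := by
  by_contra! hle
  have hpow := ofReal_zadorConst_rpow hp hd
  rw [ENNReal.ofReal_of_nonpos hle, ENNReal.zero_rpow_of_pos hp, eq_comm,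
    ENNReal.rpow_eq_zero_iff_of_pos (by positivity)] at hpow
  exact cubeQuantMass_ne_zero hp hd hpow

end Constant

section Lebesgue

variable {d : ℕ} {p η : ℝ} {A : Set (Euc d)}

lemma upperQuantMass_volume_restrict_le (hd : 0 < d) (hp : 0 < p) (hη : 0 < η)
    (hA : MeasurableSet A) (hAm : momentMass (p + η) (volume.restrict A) ≠ ∞) :
    upperQuantMass p (p / d) (volume.restrict A) ≤ cubeQuantMass p d * volume A := by
  refine ENNReal.le_of_forall_pos_le_add fun ε hε _ => ?_
  obtain ⟨K, hKA, hK, hle⟩ := exists_isCompact_upperQuantMass_restrict_compl_le hd hp hη hAm hA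
    (by rw [Measure.restrict_apply hA.compl, Set.compl_inter_self, measure_empty])
    (ENNReal.coe_ne_zero.2 hε.ne')
  conv_lhs => rw [← Measure.restrict_add_restrict_compl (μ := volume.restrict A) hK.measurableSet]
  refine (upperQuantMass_add_le hp.le (by positivity) _ _).trans (add_le_add ?_ hle)
  rw [Measure.restrict_restrict hK.measurableSet, Set.inter_eq_left.2 hKA]
  exact (upperQuantMass_volume_restrict_le_of_isCompact hp hd hK).trans (by gcongr)

lemma momentMass_volume_restrict_ne_top {t : ℝ} (ht : 0 ≤ t) (hA : MeasurableSet A)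
    (hAb : Bornology.IsBounded A) : momentMass t (volume.restrict A) ≠ ∞ := by
  obtain ⟨R, hR⟩ := hAb.exists_norm_le
  have hle : momentMass t (volume.restrict A) ≤ ∫⁻ _ in A, 1 + ENNReal.ofReal R ^ t :=
    setLIntegral_mono' hA fun y hy => by
      gcongr
      rw [← ofReal_norm]
      exact ENNReal.ofReal_le_ofReal (hR y hy)
  rw [setLIntegral_const] at hle
  exact (hle.trans_lt (ENNReal.mul_lt_top (by simp [ENNReal.rpow_lt_top_of_nonneg ht])
    hAb.measure_lt_top)).ne

lemma isCompact_preimage_unitCube {a : ℝ≥0} (ha : a ≠ 0) (c : Euc d) :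
    IsCompact ((fun y => a • y + c) ⁻¹' unitCube d) :=
  ((Homeomorph.smulOfNeZero a ha).trans (Homeomorph.addRight c)).isCompact_preimage.2
    isCompact_unitCube

lemma pow_mul_volume_preimage_unitCube {a : ℝ≥0} (ha : a ≠ 0) (c : Euc d) :
    (a : ℝ≥0∞) ^ d * volume ((fun y => a • y + c) ⁻¹' unitCube d) = 1 := by
  have hmap := congrArg (· (unitCube d))
    (map_smul_add_addHaar (volume : Measure (Euc d)) ha c)
  simpa only [Measure.smul_apply, smul_eq_mul, finrank_euclideanSpace_fin,
    Measure.map_apply (show Measurable fun y : Euc d => a • y + c by fun_prop)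
      isCompact_unitCube.measurableSet, volume_unitCube] using hmap

lemma cubeQuantMass_mul_volume_preimage_le (hp : 0 ≤ p) (hd : 0 < d) {a : ℝ≥0} (ha : a ≠ 0)
    (c : Euc d) :
    cubeQuantMass p d * volume ((fun y => a • y + c) ⁻¹' unitCube d) ≤
      lowerQuantMass p (p / d) (volume.restrict ((fun y => a • y + c) ⁻¹' unitCube d)) := by
  have hvol := pow_mul_volume_preimage_unitCube ha c
  set B := (fun y => a • y + c) ⁻¹' unitCube d
  have hscale : cubeQuantMass p d ≤
      (a : ℝ≥0∞) ^ d * lowerQuantMass p (p / d) (volume.restrict B) := by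
    have hexp : (a : ℝ≥0∞) ^ d = ((a : ℝ≥0∞) ^ (d + p)) ^ (1 + p / d)⁻¹ := by
      rw [← ENNReal.rpow_natCast, ← ENNReal.rpow_mul]
      congr 1
      field_simp
    rw [cubeQuantMass, lowerQuantMass, lowerQuantMass, hexp,
      ← ENNReal.mul_rpow_of_nonneg _ _ (by positivity),
      ← ENNReal.liminf_const_mul_of_ne_top (by simp [ha])]
    refine ENNReal.rpow_le_rpow (liminf_le_liminf (.of_forall fun x => ?_)) (by positivity)
    rw [mul_left_comm, unifCube_eq]
    gcongr
    simpa only [finrank_euclideanSpace_fin] using quantEnergy_restrict_le_preimage volume hp ha c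
      isCompact_unitCube.measurableSet x
  calc cubeQuantMass p d * volume B
      ≤ (a : ℝ≥0∞) ^ d * lowerQuantMass p (p / d) (volume.restrict B) * volume B := by gcongr
    _ = lowerQuantMass p (p / d) (volume.restrict B) := by
        rw [mul_right_comm, hvol, one_mul]

lemma exists_subset_preimage_unitCube (hAb : Bornology.IsBounded A) :
    ∃ a : ℝ≥0, a ≠ 0 ∧ ∃ c : Euc d, A ⊆ (fun y => a • y + c) ⁻¹' unitCube d := by
  obtain ⟨R, hR0, hR⟩ := hAb.exists_pos_norm_le
  lift R to ℝ≥0 using hR0.le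
  rw [gt_iff_lt, NNReal.coe_pos] at hR0
  refine ⟨(2 * R)⁻¹, by positivity, WithLp.toLp 2 fun _ => 2⁻¹, fun y hy i => ?_⟩
  obtain ⟨hlow, hup⟩ := abs_le.1 ((PiLp.norm_apply_le y i).trans (hR y hy))
  have heq : ((2 * R)⁻¹ • y + WithLp.toLp 2 fun _ => 2⁻¹ : Euc d) i = (y i + R) / (2 * R) := by
    simp [NNReal.smul_def]
    field_simp
  have hR0' : (0 : ℝ) < 2 * R := by positivity
  rw [heq]
  exact ⟨div_nonneg (by linarith) hR0'.le, (div_le_one hR0').2 (by linarith)⟩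

lemma le_lowerQuantMass_volume_restrict_of_isBounded (hd : 0 < d) (hp : 0 < p)
    (hA : MeasurableSet A) (hAb : Bornology.IsBounded A) :
    cubeQuantMass p d * volume A ≤ lowerQuantMass p (p / d) (volume.restrict A) := by
  obtain ⟨a, ha, c, hAB⟩ := exists_subset_preimage_unitCube hAb
  have hB := isCompact_preimage_unitCube ha c
  have hcube := cubeQuantMass_mul_volume_preimage_le hp.le hd ha c
  set B := (fun y => a • y + c) ⁻¹' unitCube d
  have hdiff : upperQuantMass p (p / d) (volume.restrict (B \ A)) ≤
      cubeQuantMass p d * volume (B \ A) :=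
    upperQuantMass_volume_restrict_le hd hp one_pos (hB.measurableSet.diff hA)
      (momentMass_volume_restrict_ne_top (by positivity) (hB.measurableSet.diff hA)
        (hB.isBounded.subset Set.sdiff_subset))
  have hfin : cubeQuantMass p d * volume (B \ A) ≠ ∞ :=
    ENNReal.mul_ne_top (cubeQuantMass_ne_top hp.le hd)
      (ne_top_of_le_ne_top hB.measure_lt_top.ne (measure_mono Set.sdiff_subset))
  rw [← ENNReal.add_le_add_iff_right hfin, ← mul_add, measure_add_sdiff hA.nullMeasurableSet,
    Set.union_eq_self_of_subset_left hAB]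
  have hsplit : volume.restrict B = volume.restrict A + volume.restrict (B \ A) := by
    rw [← Measure.restrict_union Set.disjoint_sdiff_right (hB.measurableSet.diff hA),
      Set.union_sdiff_cancel hAB]
  rw [hsplit] at hcube
  exact hcube.trans ((lowerQuantMass_add_le hp.le (by positivity) _ _).trans (by gcongr))

lemma le_lowerQuantMass_volume_restrict (hd : 0 < d) (hp : 0 < p) (hA : MeasurableSet A) :
    cubeQuantMass p d * volume A ≤ lowerQuantMass p (p / d) (volume.restrict A) := by
  have hmono : Monotone fun n : ℕ => A ∩ Metric.closedBall (0 : Euc d) n := fun m n hmn =>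
    Set.inter_subset_inter_right _ (Metric.closedBall_subset_closedBall (by exact_mod_cast hmn))
  have hUnion : ⋃ n : ℕ, A ∩ Metric.closedBall (0 : Euc d) n = A := by
    rw [← Set.inter_iUnion, Metric.iUnion_closedBall_nat, Set.inter_univ]
  conv_lhs => rw [← hUnion, hmono.measure_iUnion, ENNReal.mul_iSup]
  refine iSup_le fun n => ?_
  refine (le_lowerQuantMass_volume_restrict_of_isBounded hd hp
    (hA.inter Metric.isClosed_closedBall.measurableSet)
    (Metric.isBounded_closedBall.subset Set.inter_subset_right)).trans ?_
  exact lowerQuantMass_mono (by positivity) (Measure.restrict_mono Set.inter_subset_left le_rfl)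

end Lebesgue

section HasQuantMass

/-- The normalised energies of `μ` converge, and their limit is `a ^ (1 + r)`. -/
def HasQuantMass {E : Type*} [PseudoEMetricSpace E] [MeasurableSpace E] (p r : ℝ) (μ : Measure E)
    (a : ℝ≥0∞) : Prop :=
  upperQuantMass p r μ ≤ a ∧ a ≤ lowerQuantMass p r μ

section General

variable {E : Type*} [PseudoEMetricSpace E] [MeasurableSpace E] {p r : ℝ} {μ : Measure E}
  {a : ℝ≥0∞}

lemma hasQuantMass_zero (hr : 0 ≤ r) : HasQuantMass p r (0 : Measure E) 0 :=
  ⟨(upperQuantMass_zero hr).le, zero_le⟩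

lemma HasQuantMass.smul (hr : 0 ≤ r) (h : HasQuantMass p r μ a) {c : ℝ≥0∞} (hc : c ≠ ∞) :
    HasQuantMass p r (c • μ) (c ^ (1 + r)⁻¹ * a) := by
  rcases eq_or_ne c 0 with rfl | hc0
  · rw [zero_smul, ENNReal.zero_rpow_of_pos (by positivity), zero_mul]
    exact hasQuantMass_zero hr
  · rw [HasQuantMass, upperQuantMass_smul hr hc0 hc, lowerQuantMass_smul hr hc0 hc]
    exact ⟨mul_le_mul_right h.1 _, mul_le_mul_right h.2 _⟩

lemma HasQuantMass.tendsto (hr : 0 ≤ r) (h : HasQuantMass p r μ a) :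
    Tendsto (fun x : ℝ≥0 => (x : ℝ≥0∞) ^ r * quantEnergy p x μ) atTop (𝓝 (a ^ (1 + r))) := by
  refine tendsto_of_le_liminf_of_limsup_le ?_ ?_
  · rw [← lowerQuantMass_rpow hr]
    exact ENNReal.rpow_le_rpow h.2 (by positivity)
  · rw [← upperQuantMass_rpow hr]
    exact ENNReal.rpow_le_rpow h.1 (by positivity)

end General

variable {d : ℕ} {p η : ℝ} {μ ν : Measure (Euc d)} {a b : ℝ≥0∞}

lemma HasQuantMass.add_of_mutuallySingular (hd : 0 < d) (hp : 0 < p) (hη : 0 < η)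
    (hμ : momentMass (p + η) μ ≠ ∞) (hν : momentMass (p + η) ν ≠ ∞) (hμν : μ.MutuallySingular ν)
    (ha : HasQuantMass p (p / d) μ a) (hb : HasQuantMass p (p / d) ν b) :
    HasQuantMass p (p / d) (μ + ν) (a + b) :=
  ⟨(upperQuantMass_add_le hp.le (by positivity) μ ν).trans (add_le_add ha.1 hb.1),
    (add_le_add ha.2 hb.2).trans (lowerQuantMass_add_le_of_mutuallySingular hd hp hη hμ hν hμν)⟩

lemma HasQuantMass.ne_top (hd : 0 < d) (hp : 0 < p) (hη : 0 < η)
    (hμ : momentMass (p + η) μ ≠ ∞) (ha : HasQuantMass p (p / d) μ a) : a ≠ ∞ := by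
  obtain ⟨C, hC⟩ := exists_forall_upperQuantMass_le_momentMass hd hp hη
  refine ne_top_of_le_ne_top ?_
    (ha.2.trans ((lowerQuantMass_le_upperQuantMass (by positivity) μ).trans (hC μ)))
  exact ENNReal.mul_ne_top ENNReal.coe_ne_top (ENNReal.rpow_ne_top_of_nonneg (by positivity) hμ)

lemma hasQuantMass_zero_of_mutuallySingular (hd : 0 < d) (hp : 0 < p) (hη : 0 < η)
    (hν : momentMass (p + η) ν ≠ ∞) (hsing : ν.MutuallySingular volume) :
    HasQuantMass p (p / d) ν 0 :=
  ⟨(upperQuantMass_eq_zero_of_mutuallySingular hd hp hη hν hsing).le, zero_le⟩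

lemma hasQuantMass_volume_restrict (hd : 0 < d) (hp : 0 < p) (hη : 0 < η) {A : Set (Euc d)}
    (hA : MeasurableSet A) (hAm : momentMass (p + η) (volume.restrict A) ≠ ∞) :
    HasQuantMass p (p / d) (volume.restrict A) (cubeQuantMass p d * volume A) :=
  ⟨upperQuantMass_volume_restrict_le hd hp hη hA hAm, le_lowerQuantMass_volume_restrict hd hp hA⟩

end HasQuantMass

section Density

section General

variable {α : Type*} [MeasurableSpace α] {μ : Measure α} {f g : α → ℝ≥0∞}

lemma withDensity_mutuallySingular_of_disjoint_support (hf : Measurable f) (hg : Measurable g)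
    (hfg : Disjoint (Function.support f) (Function.support g)) :
    (μ.withDensity f).MutuallySingular (μ.withDensity g) := by
  refine ⟨(Function.support f)ᶜ, (measurableSet_support hf).compl,
    (withDensity_apply_eq_zero hf).2 ?_, (withDensity_apply_eq_zero hg).2 ?_⟩
  · exact (congrArg μ (Set.inter_compl_self _)).trans measure_empty
  · rw [compl_compl]
    exact (congrArg μ hfg.symm.inter_eq).trans measure_empty

lemma lintegral_add_rpow_of_disjoint_support (hf : Measurable f)
    (hfg : Disjoint (Function.support f) (Function.support g)) {q : ℝ} (hq : 0 < q) :
    ∫⁻ y, (f + g) y ^ q ∂μ = ∫⁻ y, f y ^ q ∂μ + ∫⁻ y, g y ^ q ∂μ := by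
  rw [← lintegral_add_left (hf.pow_const q)]
  refine lintegral_congr fun y => ?_
  rcases eq_or_ne (f y) 0 with hy | hy
  · simp [hy, ENNReal.zero_rpow_of_pos hq]
  · have hgy : g y = 0 := by simpa using Set.disjoint_left.1 hfg hy
    simp [hgy, ENNReal.zero_rpow_of_pos hq]

lemma lintegral_iSup_rpow {f : ℕ → α → ℝ≥0∞} (hf : ∀ n, Measurable (f n)) (hmono : Monotone f)
    {q : ℝ} (hq : 0 < q) :
    ∫⁻ y, (⨆ n, f n y) ^ q ∂μ = ⨆ n, ∫⁻ y, f n y ^ q ∂μ := by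
  rw [← lintegral_iSup (fun n => (hf n).pow_const q)
    fun m n hmn y => ENNReal.rpow_le_rpow (hmono hmn y) hq.le]
  exact lintegral_congr fun y => (ENNReal.orderIsoRpow q hq).map_iSup _

lemma exists_lintegral_iSup_sub_le {f : ℕ → α → ℝ≥0∞} (hf : ∀ n, Measurable (f n))
    (hmono : Monotone f) (hfin : ∫⁻ y, ⨆ n, f n y ∂μ ≠ ∞) {δ : ℝ≥0∞} (hδ : δ ≠ 0) :
    ∃ n, ∫⁻ y, (⨆ m, f m y) - f n y ∂μ ≤ δ := by
  have hle (n : ℕ) : f n ≤ fun y => ⨆ m, f m y := fun y => le_iSup (f · y) n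
  have hlim : Tendsto (fun n => ∫⁻ y, ⨆ m, f m y ∂μ - ∫⁻ y, f n y ∂μ) atTop (𝓝 0) := by
    have hsup := tendsto_atTop_iSup fun m n hmn => lintegral_mono (μ := μ) (hmono hmn)
    rw [← lintegral_iSup hf hmono] at hsup
    simpa only [tsub_self] using ENNReal.Tendsto.sub tendsto_const_nhds hsup (.inl hfin)
  obtain ⟨n, hn⟩ := (hlim.eventually_le_const (pos_iff_ne_zero.2 hδ)).exists
  refine ⟨n, ?_⟩
  rwa [lintegral_sub (hf n) (ne_top_of_le_ne_top hfin (lintegral_mono (hle n)))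
    (.of_forall (hle n))]

end General

lemma momentMass_withDensity {E : Type*} [NormedAddCommGroup E] [MeasurableSpace E] [BorelSpace E]
    {t : ℝ} {f : E → ℝ≥0∞} (hf : Measurable f) (μ : Measure E) :
    momentMass t (μ.withDensity f) = ∫⁻ y, f y ∂μ.withDensity fun y => 1 + ‖y‖ₑ ^ t := by
  have hw : Measurable fun y : E => 1 + ‖y‖ₑ ^ t := by fun_prop
  rw [momentMass, lintegral_withDensity_eq_lintegral_mul _ hf hw,
    lintegral_withDensity_eq_lintegral_mul _ hw hf, mul_comm]

variable {d : ℕ} {p η : ℝ}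

lemma hasQuantMass_withDensity_indicator (hd : 0 < d) (hp : 0 < p) (hη : 0 < η) {s : Set (Euc d)}
    (hs : MeasurableSet s) (c : ℝ≥0∞)
    (hmom : momentMass (p + η) (volume.withDensity (s.indicator fun _ => c)) ≠ ∞) :
    HasQuantMass p (p / d) (volume.withDensity (s.indicator fun _ => c))
      (cubeQuantMass p d * ∫⁻ y, s.indicator (fun _ => c) y ^ (1 + p / d)⁻¹) := by
  have hr : 0 ≤ p / d := by positivity
  have hq : 0 < (1 + p / d)⁻¹ := by positivity
  have hint : ∫⁻ y, s.indicator (fun _ => c) y ^ (1 + p / d)⁻¹ =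
      c ^ (1 + p / d)⁻¹ * volume s := by
    rw [← lintegral_indicator_const hs]
    exact lintegral_congr fun y =>
      (congrFun (Set.indicator_comp_of_zero (g := (· ^ (1 + p / d)⁻¹))
        (ENNReal.zero_rpow_of_pos hq)) y).symm
  rw [withDensity_indicator hs, withDensity_const] at hmom ⊢
  rw [hint, mul_left_comm]
  rcases eq_or_ne c 0 with rfl | hc0
  · rw [zero_smul, ENNReal.zero_rpow_of_pos hq, zero_mul]
    exact hasQuantMass_zero hr
  rcases eq_or_ne (volume s) 0 with hs0 | hs0
  · rw [Measure.restrict_eq_zero.2 hs0, hs0, smul_zero, mul_zero, mul_zero]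
    exact hasQuantMass_zero hr
  have hc : c ≠ ∞ := by
    rintro rfl
    have := isFiniteMeasure_of_momentMass_ne_top hmom
    exact measure_ne_top (∞ • volume.restrict s) Set.univ (by simp [hs0])
  refine (hasQuantMass_volume_restrict hd hp hη hs fun htop => hmom ?_).smul hr hc
  rw [momentMass, lintegral_smul_measure, ← momentMass, htop, smul_eq_mul, ENNReal.mul_top hc0]

lemma hasQuantMass_withDensity_iSup (hd : 0 < d) (hp : 0 < p) (hη : 0 < η)
    {f : ℕ → Euc d → ℝ≥0∞} (hf : ∀ n, Measurable (f n)) (hmono : Monotone f)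
    (hmom : momentMass (p + η) (volume.withDensity fun y => ⨆ n, f n y) ≠ ∞)
    (hmass : ∀ n, HasQuantMass p (p / d) (volume.withDensity (f n))
      (cubeQuantMass p d * ∫⁻ y, f n y ^ (1 + p / d)⁻¹)) :
    HasQuantMass p (p / d) (volume.withDensity fun y => ⨆ n, f n y)
      (cubeQuantMass p d * ∫⁻ y, (⨆ n, f n y) ^ (1 + p / d)⁻¹) := by
  have hr : 0 ≤ p / d := by positivity
  have hle (n : ℕ) : f n ≤ fun y => ⨆ m, f m y := fun y => le_iSup (f · y) n
  constructor
  · refine ENNReal.le_of_forall_pos_le_add fun ε hε _ => ?_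
    obtain ⟨δ, hδ, hsmall⟩ := exists_forall_upperQuantMass_le_of_momentMass_le hd hp hη
      (ENNReal.coe_ne_zero.2 hε.ne')
    rw [momentMass_withDensity (.iSup hf)] at hmom
    obtain ⟨n, hn⟩ := exists_lintegral_iSup_sub_le hf hmono hmom hδ
    have hrest : momentMass (p + η) (volume.withDensity ((fun y => ⨆ m, f m y) - f n)) ≤ δ :=
      (momentMass_withDensity ((Measurable.iSup hf).sub (hf n)) _).trans_le hn
    calc upperQuantMass p (p / d) (volume.withDensity fun y => ⨆ m, f m y)
        = upperQuantMass p (p / d) (volume.withDensity (f n) +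
            volume.withDensity ((fun y => ⨆ m, f m y) - f n)) := by
          rw [← withDensity_add_left (hf n), add_tsub_cancel_of_le (hle n)]
      _ ≤ cubeQuantMass p d * (∫⁻ y, f n y ^ (1 + p / d)⁻¹) + ε :=
          (upperQuantMass_add_le hp.le hr _ _).trans (add_le_add (hmass n).1 (hsmall _ hrest))
      _ ≤ cubeQuantMass p d * (∫⁻ y, (⨆ m, f m y) ^ (1 + p / d)⁻¹) + ε := by
          gcongr with y
          exact hle n y
  · rw [lintegral_iSup_rpow hf hmono (by positivity), ENNReal.mul_iSup]
    exact iSup_le fun n => (hmass n).2.trans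
      (lowerQuantMass_mono hr (withDensity_mono (.of_forall (hle n))))

lemma hasQuantMass_withDensity (hd : 0 < d) (hp : 0 < p) (hη : 0 < η) {g : Euc d → ℝ≥0∞}
    (hg : Measurable g) (hmom : momentMass (p + η) (volume.withDensity g) ≠ ∞) :
    HasQuantMass p (p / d) (volume.withDensity g)
      (cubeQuantMass p d * ∫⁻ y, g y ^ (1 + p / d)⁻¹) := by
  have hmono {f g : Euc d → ℝ≥0∞} (hfg : f ≤ g)
      (hgm : momentMass (p + η) (volume.withDensity g) ≠ ∞) :
      momentMass (p + η) (volume.withDensity f) ≠ ∞ :=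
    ne_top_of_le_ne_top hgm (momentMass_mono (withDensity_mono (.of_forall hfg)))
  refine Measurable.ennreal_induction (motive := fun g =>
    momentMass (p + η) (volume.withDensity g) ≠ ∞ → HasQuantMass p (p / d) (volume.withDensity g)
      (cubeQuantMass p d * ∫⁻ y, g y ^ (1 + p / d)⁻¹))
    (fun c s hs => hasQuantMass_withDensity_indicator hd hp hη hs c) ?_ ?_ hg hmom
  · intro f g hfg hf hg hf' hg' hmom
    have hfm := hmono le_self_add hmom
    have hgm := hmono le_add_self hmom
    rw [withDensity_add_left hf, lintegral_add_rpow_of_disjoint_support hf hfg (by positivity),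
      mul_add]
    exact (hf' hfm).add_of_mutuallySingular hd hp hη hfm hgm
      (withDensity_mutuallySingular_of_disjoint_support hf hg hfg) (hg' hgm)
  · intro f hf hfmono hf' hmom
    exact hasQuantMass_withDensity_iSup hd hp hη hf hfmono hmom fun n =>
      hf' n (hmono (fun y => le_iSup (f · y) n) hmom)

end Density

section Limit

variable {d : ℕ} {p η : ℝ} {μ ν : Measure (Euc d)}

lemma momentMass_ne_top_of_integrable {E : Type*} [NormedAddCommGroup E] [MeasurableSpace E]
    {μ : Measure E} [IsFiniteMeasure μ] {t : ℝ} (ht : 0 ≤ t)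
    (hμ : Integrable (fun y => ‖y‖ ^ t) μ) : momentMass t μ ≠ ∞ := by
  have hint := ((integrable_const (1 : ℝ)).add hμ).lintegral_lt_top.ne
  rwa [momentMass, lintegral_congr fun y => ?_]
  simp only [Pi.add_apply]
  rw [ENNReal.ofReal_add zero_le_one (by positivity), ENNReal.ofReal_one,
    ← ENNReal.ofReal_rpow_of_nonneg (norm_nonneg y) ht, ofReal_norm]

lemma memLp_id_of_integrable_norm_rpow [IsFiniteMeasure μ] (hp : 0 ≤ p) (hη : 0 < η)
    (hμ : Integrable (fun y => ‖y‖ ^ (p + η)) μ) : MemLp id (ENNReal.ofReal p) μ := by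
  have hq : ENNReal.ofReal (p + η) ≠ 0 := (ENNReal.ofReal_pos.2 (by positivity)).ne'
  refine MemLp.mono_exponent ?_ (ENNReal.ofReal_le_ofReal (le_add_of_nonneg_right hη.le))
  rw [← integrable_norm_rpow_iff aestronglyMeasurable_id hq ENNReal.ofReal_ne_top,
    ENNReal.toReal_ofReal (by positivity)]
  exact hμ

lemma optQuantErrM_nonneg {N : ℕ} : 0 ≤ optQuantErrM p N μ := by
  refine Real.sInf_nonneg ?_
  rintro _ ⟨Γ, -, -, rfl⟩
  exact rpow_nonneg (integral_nonneg fun y => rpow_nonneg Metric.infDist_nonneg p) _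

lemma HasQuantMass.tendsto_optQuantErrM [IsFiniteMeasure μ] (hd : 0 < d) (hp : 0 < p)
    (hμ : MemLp id (ENNReal.ofReal p) μ) {a : ℝ≥0∞} (ha : HasQuantMass p (p / d) μ a)
    (ha' : a ≠ ∞) :
    Tendsto (fun N : ℕ => (N : ℝ) ^ (1 / (d : ℝ)) * optQuantErrM p N μ) atTop
      (𝓝 (a.toReal ^ ((d + p) / (d * p)))) := by
  have hexp : (1 + p / d) * p⁻¹ = (d + p) / (d * p) := by field_simp
  have hlim := (ENNReal.tendsto_toReal (by finiteness)).comp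
    (((ENNReal.continuous_rpow_const (y := p⁻¹)).tendsto _).comp
      ((ha.tendsto (by positivity)).comp tendsto_natCast_atTop_atTop))
  rw [← ENNReal.rpow_mul, hexp, ← ENNReal.toReal_rpow] at hlim
  refine hlim.congr' ?_
  filter_upwards [eventually_ge_atTop 1] with N hN
  simp only [Function.comp_apply, ENNReal.coe_natCast]
  rw [← ofReal_rpow_mul_optQuantErrM_rpow hp hμ hN, ENNReal.rpow_rpow_inv hp.ne',
    ENNReal.toReal_ofReal (mul_nonneg (by positivity) optQuantErrM_nonneg)]

lemma zadorConst_eq (hp : 0 < p) (hd : 0 < d) :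
    zadorConst p d = (cubeQuantMass p d).toReal ^ ((d + p) / (d * p)) := by
  have hexp : (1 + p / d) * p⁻¹ = (d + p) / (d * p) := by field_simp
  have hpow := congrArg (fun u => (u ^ p⁻¹).toReal) (ofReal_zadorConst_rpow hp hd)
  simpa only [ENNReal.rpow_rpow_inv hp.ne', ENNReal.toReal_ofReal (zadorConst_pos hp hd).le,
    ← ENNReal.rpow_mul, hexp, ← ENNReal.toReal_rpow] using hpow

lemma hasQuantMass_withDensity_add_of_mutuallySingular (hd : 0 < d) (hp : 0 < p) (hη : 0 < η)
    {g : Euc d → ℝ≥0∞} (hg : Measurable g) (hν : ν.MutuallySingular volume)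
    (hmom : momentMass (p + η) (volume.withDensity g + ν) ≠ ∞) :
    HasQuantMass p (p / d) (volume.withDensity g + ν)
      (cubeQuantMass p d * ∫⁻ y, g y ^ (1 + p / d)⁻¹) := by
  have hgm := ne_top_of_le_ne_top hmom (momentMass_mono (Measure.le_add_right le_rfl))
  have hνm := ne_top_of_le_ne_top hmom (momentMass_mono (Measure.le_add_left le_rfl))
  simpa only [add_zero] using
    (hasQuantMass_withDensity hd hp hη hg hgm).add_of_mutuallySingular hd hp hη hgm hνm
      (hν.symm.mono_ac (withDensity_absolutelyContinuous _ _) .rfl)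
      (hasQuantMass_zero_of_mutuallySingular hd hp hη hνm hν)

lemma integral_rpow_eq_toReal_lintegral {α : Type*} [MeasurableSpace α] {μ : Measure α} {h : α → ℝ}
    (hh : Measurable h) (hh0 : ∀ y, 0 ≤ h y) {q : ℝ} (hq : 0 ≤ q) :
    ∫ y, h y ^ q ∂μ = (∫⁻ y, ENNReal.ofReal (h y) ^ q ∂μ).toReal := by
  rw [integral_eq_lintegral_of_nonneg_ae (.of_forall fun y => rpow_nonneg (hh0 y) q)
    (hh.pow_const q).aestronglyMeasurable]
  simp only [ENNReal.ofReal_rpow_of_nonneg (hh0 _) hq]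

end Limit

theorem zador_general {d : ℕ} (hd : 1 ≤ d) {p η : ℝ} (hp : 0 < p) (hη : 0 < η)
    {μ : Measure (Euc d)} [IsFiniteMeasure μ] (hmom : Integrable (fun x => ‖x‖ ^ (p + η)) μ)
    {h : Euc d → ℝ} (hh : Measurable h) (hh0 : ∀ x, 0 ≤ h x)
    {ν : Measure (Euc d)} (hν : ν.MutuallySingular volume)
    (hdec : μ = volume.withDensity (fun x => ENNReal.ofReal (h x)) + ν) :
    0 < zadorConst p d ∧
      Tendsto (fun N : ℕ => (N : ℝ) ^ (1 / (d : ℝ)) * optQuantErrM p N μ) atTop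
        (𝓝 (zadorConst p d *
          (∫ x, h x ^ ((d : ℝ) / (d + p))) ^ (((d : ℝ) + p) / (d * p)))) := by
  have hexp : (1 + p / d)⁻¹ = d / (d + p) := by field_simp
  have hmass := momentMass_ne_top_of_integrable (by positivity) hmom
  have hquant : HasQuantMass p (p / d) μ _ := hdec ▸
    hasQuantMass_withDensity_add_of_mutuallySingular hd hp hη hh.ennreal_ofReal hν (hdec ▸ hmass)
  have hlim := hquant.tendsto_optQuantErrM hd hp (memLp_id_of_integrable_norm_rpow hp.le hη hmom)
    (hquant.ne_top hd hp hη hmass)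
  rw [ENNReal.toReal_mul, mul_rpow ENNReal.toReal_nonneg ENNReal.toReal_nonneg,
    ← zadorConst_eq hp hd, ← integral_rpow_eq_toReal_lintegral hh hh0 (by positivity), hexp] at hlim
  exact ⟨zadorConst_pos hp hd, hlim⟩

/-- **Zador's Theorem.** Let `p, η > 0` and `X` an ℝ^d-valued random vector with
`E|X|^{p+η} < ∞` whose law decomposes as `h·λ_d + ν` with `ν ⟂ λ_d`.  Then
`N^{1/d} e_{p,N}(X) → J̃_{p,d} · (∫ h^{d/(d+p)} dλ_d)^{(d+p)/(dp)}` as `N → ∞`,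
where `J̃_{p,d} ∈ (0,∞)`. -/
theorem zador (d : ℕ) (hd : 1 ≤ d) (p η : ℝ) (hp : 0 < p) (hη : 0 < η)
    (Ω : Type*) [MeasurableSpace Ω] (P : Measure Ω) [IsProbabilityMeasure P]
    (X : Ω → Euc d) (hXm : Measurable X)
    (hmom : Integrable (fun ω => ‖X ω‖ ^ (p + η)) P)
    (h : Euc d → ℝ) (hh : Measurable h) (hh0 : ∀ x, 0 ≤ h x)
    (ν : Measure (Euc d)) (hν : ν.MutuallySingular (volume : Measure (Euc d)))
    (hdec : P.map X
      = (volume : Measure (Euc d)).withDensity (fun x => ENNReal.ofReal (h x)) + ν) :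
    0 < zadorConst p d ∧
      Tendsto (fun N : ℕ => (N : ℝ) ^ (1 / (d : ℝ)) * optQuantErrM p N (P.map X)) atTop
        (nhds (zadorConst p d *
          (∫ x, h x ^ ((d : ℝ) / ((d : ℝ) + p))) ^ (((d : ℝ) + p) / ((d : ℝ) * p)))) := by
  refine zador_general hd hp hη ?_ hh hh0 hν hdec
  exact (integrable_map_measure (measurable_norm.pow_const _).aestronglyMeasurable
    hXm.aemeasurable).2 hmom
end
end

section
/- Let r ∈ [2,∞) and h₀ > 0. Let Z be an ℝ^q-valued random vector with E|Z|^r < ∞ and E[Z] = 0, and let a ∈ ℝ^d, A ∈ M(d,q,ℝ). Then for every h ∈ (0, h₀): E|a + √h·A Z|^r ≤ |a|^r (1 + c_r^{(1)} h) + c^{(2)}_{r,h₀} h ‖A‖^r E|Z|^r, where c_r^{(1)} = 2^{(r−3)₊}(r−1)(r−2)/2, c^{(2)}_{r,h₀} = 2^{(r−3)₊}(r−1)(1 + (r/2)h₀^{r/2−1}), and ‖A‖ is the operator norm of A. -/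
open MeasureTheory Real

noncomputable section

def c₁ (r : ℝ) : ℝ := 2 ^ (max (r - 3) 0) * ((r - 1) * (r - 2) / 2)

def c₂ (r h₀ : ℝ) : ℝ := 2 ^ (max (r - 3) 0) * (r - 1) * (1 + r / 2 * h₀ ^ (r / 2 - 1))

/-!
The gradient `r ‖x‖ ^ (r - 2) x` of `‖x‖ ^ r` satisfies a one-sided Lipschitz bound with constant
`r (r - 1) R ^ (r - 2)` on the ball of radius `R`, a consequence of the tangent line inequality for
`t ↦ t ^ (r - 1)`. Hence `‖a + u‖ ^ r` exceeds its first-order expansion at `a` by at most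
`r (r - 1) / 2 * (‖a‖ + ‖u‖) ^ (r - 2) ‖u‖ ^ 2`. For `u = √h • X`, splitting the power of the sum
and applying Young's inequality to `‖a‖ ^ (r - 2) ‖X‖ ^ 2` gives a pointwise bound by
`‖a‖ ^ r`, `‖X‖ ^ r` and a term linear in `X`; the latter has zero mean.
-/

theorem mul_rpow_sub_mul_rpow_le {r s x y : ℝ} (hr : 0 < r) (hs : 0 ≤ s) (hsr : s ≤ r)
    (hx : 0 ≤ x) (hy : 0 ≤ y) :
    r * (x ^ (r - s) * y ^ s) ≤ (r - s) * x ^ r + s * y ^ r := by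
  have amgm := geom_mean_le_arith_mean2_weighted (w₁ := (r - s) / r) (w₂ := s / r)
    (div_nonneg (sub_nonneg.2 hsr) hr.le) (div_nonneg hs hr.le)
    (rpow_nonneg hx r) (rpow_nonneg hy r) (by field_simp; ring)
  rw [← rpow_mul hx, ← rpow_mul hy, mul_div_cancel₀ _ hr.ne', mul_div_cancel₀ _ hr.ne'] at amgm
  calc r * (x ^ (r - s) * y ^ s) ≤ r * ((r - s) / r * x ^ r + s / r * y ^ r) := by gcongr
    _ = (r - s) * x ^ r + s * y ^ r := by field_simp

theorem rpow_sub_rpow_le_mul_sub {p x y : ℝ} (hp : 1 ≤ p) (hx : 0 ≤ x) (hy : 0 ≤ y) :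
    x ^ p - y ^ p ≤ p * x ^ (p - 1) * (x - y) := by
  have young := mul_rpow_sub_mul_rpow_le (by linarith) zero_le_one hp hx hy
  have hxp : x ^ p = x ^ (p - 1) * x := by
    rw [← rpow_add_one' hx (by linarith), sub_add_cancel]
  rw [rpow_one, hxp] at young
  rw [hxp]
  linarith

theorem add_rpow_le_two_rpow_mul_add {m x y : ℝ} (hm : 0 ≤ m) (hx : 0 ≤ x) (hy : 0 ≤ y) :
    (x + y) ^ m ≤ 2 ^ max (m - 1) 0 * (x ^ m + y ^ m) := by
  rcases le_total m 1 with hm1 | hm1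
  · rw [max_eq_right (by linarith), rpow_zero, one_mul]
    exact rpow_add_le_add_rpow hx hy hm hm1
  · rw [max_eq_left (by linarith)]
    lift x to NNReal using hx
    lift y to NNReal using hy
    exact_mod_cast NNReal.rpow_add_le_mul_rpow_add_rpow x y hm1

theorem le_add_mul_sub_add_half_mul_sub_sq {f f' : ℝ → ℝ} {a b c M : ℝ} (hab : a ≤ b)
    (hf : ∀ t ∈ Set.Icc a b, HasDerivAt f (f' t) t)
    (hf' : ∀ t ∈ Set.Ico a b, f' t ≤ c + M * (t - a)) :
    f b ≤ f a + c * (b - a) + M / 2 * (b - a) ^ 2 := by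
  have hB (t : ℝ) : HasDerivAt (fun t => f a + c * (t - a) + M / 2 * (t - a) ^ 2)
      (c + M * (t - a)) t := by
    have hsub := (hasDerivAt_id t).sub_const a
    refine (((hsub.const_mul c).const_add (f a)).add
      ((hsub.pow 2).const_mul (M / 2))).congr_deriv ?_
    simp only [id_eq]
    ring
  exact image_le_of_deriv_right_le_deriv_boundary
    (fun t ht => (hf t ht).continuousAt.continuousWithinAt)
    (fun t ht => (hf t (Set.Ico_subset_Icc_self ht)).hasDerivWithinAt) (by simp)
    (fun t _ => (hB t).continuousAt.continuousWithinAt)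
    (fun t _ => (hB t).hasDerivWithinAt) hf' (Set.right_mem_Icc.2 hab)

section NormedSpace

variable {E F : Type*} [NormedAddCommGroup E] [NormedSpace ℝ E]
  [NormedAddCommGroup F] [NormedSpace ℝ F]

theorem le_add_fderiv_add_half_mul_norm_sq {f : E → ℝ} {f' : E → E →L[ℝ] ℝ} {L : ℝ} {x y : E}
    (hf : ∀ z ∈ segment ℝ x y, HasFDerivAt f (f' z) z)
    (hL : ∀ z ∈ segment ℝ x y, f' z (z - x) - f' x (z - x) ≤ L * ‖z - x‖ ^ 2) :
    f y ≤ f x + f' x (y - x) + L / 2 * ‖y - x‖ ^ 2 := by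
  let γ : ℝ → E := AffineMap.lineMap x y
  have hγ {t : ℝ} (ht : t ∈ Set.Icc 0 1) : γ t ∈ segment ℝ x y := by
    rw [segment_eq_image_lineMap]
    exact Set.mem_image_of_mem _ ht
  have hfγ (t : ℝ) (ht : t ∈ Set.Icc 0 1) : HasDerivAt (f ∘ γ) (f' (γ t) (y - x)) t :=
    (hf _ (hγ ht)).comp_hasDerivAt t AffineMap.hasDerivAt_lineMap
  have deriv_le (t : ℝ) (ht : t ∈ Set.Ico 0 1) :
      f' (γ t) (y - x) ≤ f' x (y - x) + L * ‖y - x‖ ^ 2 * (t - 0) := by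
    rcases ht.1.eq_or_lt with rfl | t_pos
    · simp [γ]
    · have hz : γ t - x = t • (y - x) := AffineMap.lineMap_vsub_left x y t
      have := hL _ (hγ ⟨ht.1, ht.2.le⟩)
      rw [hz, map_smul, map_smul, smul_eq_mul, smul_eq_mul, norm_smul, mul_pow, norm_eq_abs,
        sq_abs] at this
      refine le_of_mul_le_mul_left ?_ t_pos
      linarith
  have := le_add_mul_sub_add_half_mul_sub_sq zero_le_one hfγ deriv_le
  simp only [Function.comp_apply, γ, AffineMap.lineMap_apply_zero, AffineMap.lineMap_apply_one]
    at this
  linarith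

theorem norm_clm_apply_rpow_le {r : ℝ} (hr : 0 ≤ r) (A : F →L[ℝ] E) (z : F) :
    ‖A z‖ ^ r ≤ ‖A‖ ^ r * ‖z‖ ^ r := by
  rw [← mul_rpow (norm_nonneg _) (norm_nonneg _)]
  exact rpow_le_rpow (norm_nonneg _) (A.le_opNorm z) hr

theorem norm_sqrt_smul_rpow_le {r h₀ h : ℝ} (hr : 2 ≤ r) (hh : h ∈ Set.Icc 0 h₀) (w : E) :
    ‖√h • w‖ ^ r ≤ h * h₀ ^ (r / 2 - 1) * ‖w‖ ^ r := by
  have sqrt_rpow : √h ^ r = h * h ^ (r / 2 - 1) := by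
    rw [sqrt_eq_rpow, ← rpow_mul hh.1, ← rpow_one_add' hh.1 (by linarith)]
    congr 1
    ring
  rw [norm_smul, norm_of_nonneg (sqrt_nonneg h), mul_rpow (sqrt_nonneg h) (norm_nonneg w),
    sqrt_rpow]
  obtain ⟨h_nonneg, h_le⟩ := hh
  gcongr
  linarith

end NormedSpace

section InnerProductSpace

variable {E : Type*} [NormedAddCommGroup E] [InnerProductSpace ℝ E]

theorem inner_norm_rpow_smul_sub_le {p : ℝ} (hp : 0 ≤ p) (x y : E) :
    inner ℝ (‖x‖ ^ p • x - ‖y‖ ^ p • y) (x - y) ≤ (p + 1) * max ‖x‖ ‖y‖ ^ p * ‖x - y‖ ^ 2 := by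
  wlog hyx : ‖y‖ ≤ ‖x‖ generalizing x y
  · have := this y x (le_of_not_ge hyx)
    rwa [max_comm, norm_sub_rev, ← neg_sub (_ • x), ← neg_sub x, inner_neg_neg] at this
  rw [max_eq_left hyx]
  set s := ‖x‖ with hs
  set σ := ‖y‖ with hσ
  set D := ‖x - y‖ ^ 2
  have hσs : σ ^ p ≤ s ^ p := rpow_le_rpow (norm_nonneg y) hyx hp
  have hsD : (s - σ) ^ 2 ≤ D :=
    pow_le_pow_left₀ (sub_nonneg.2 hyx) (norm_sub_norm_le x y) 2
  have tangent : s ^ p * s - σ ^ p * σ ≤ (p + 1) * s ^ p * (s - σ) := by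
    have := rpow_sub_rpow_le_mul_sub (le_add_of_nonneg_left hp) (norm_nonneg x) (norm_nonneg y)
    rwa [rpow_add_one' (norm_nonneg x) (by linarith), rpow_add_one' (norm_nonneg y) (by linarith),
      add_sub_cancel_right] at this
  have polarization : D = s ^ 2 - 2 * inner ℝ x y + σ ^ 2 := norm_sub_sq_real x y
  calc inner ℝ (s ^ p • x - σ ^ p • y) (x - y)
      = (s ^ p * s - σ ^ p * σ) * (s - σ) + (s ^ p + σ ^ p) / 2 * (D - (s - σ) ^ 2) := by
        rw [polarization]
        simp only [inner_sub_left, inner_sub_right, real_inner_smul_left,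
          real_inner_self_eq_norm_sq, real_inner_comm x y, ← hs, ← hσ]
        ring
    _ ≤ (p + 1) * s ^ p * (s - σ) * (s - σ) + (s ^ p + s ^ p) / 2 * (D - (s - σ) ^ 2) := by
        have := sub_nonneg.2 hyx
        have := sub_nonneg.2 hsD
        gcongr
    _ ≤ (p + 1) * s ^ p * D := by
        have : 0 ≤ p * s ^ p * (D - (s - σ) ^ 2) :=
          mul_nonneg (by positivity) (sub_nonneg.2 hsD)
        linarith

theorem norm_add_rpow_le_taylor {r : ℝ} (hr : 2 ≤ r) (a u : E) :
    ‖a + u‖ ^ r ≤ ‖a‖ ^ r + r * ‖a‖ ^ (r - 2) * inner ℝ a u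
      + r * (r - 1) / 2 * (‖a‖ + ‖u‖) ^ (r - 2) * ‖u‖ ^ 2 := by
  have max_norm_le {z : E} (hz : z ∈ segment ℝ a (a + u)) : max ‖z‖ ‖a‖ ≤ ‖a‖ + ‖u‖ := by
    have hza : ‖z - a‖ ≤ ‖u‖ := by simpa using norm_sub_le_of_mem_segment hz
    have hz' : ‖z‖ ≤ ‖a‖ + ‖z - a‖ := norm_le_norm_add_norm_sub' z a
    exact max_le (by linarith) (by linarith [norm_nonneg u])
  have grad_le (z : E) (hz : z ∈ segment ℝ a (a + u)) :
      ((r * ‖z‖ ^ (r - 2)) • innerSL ℝ z) (z - a) - ((r * ‖a‖ ^ (r - 2)) • innerSL ℝ a) (z - a)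
        ≤ r * (r - 1) * (‖a‖ + ‖u‖) ^ (r - 2) * ‖z - a‖ ^ 2 := by
    calc _ = r * inner ℝ (‖z‖ ^ (r - 2) • z - ‖a‖ ^ (r - 2) • a) (z - a) := by
          simp only [smul_apply, innerSL_apply_apply, smul_eq_mul,
            inner_sub_left, real_inner_smul_left]
          ring
      _ ≤ r * ((r - 2 + 1) * max ‖z‖ ‖a‖ ^ (r - 2) * ‖z - a‖ ^ 2) := by
          gcongr
          exact inner_norm_rpow_smul_sub_le (by linarith) z a
      _ ≤ r * ((r - 2 + 1) * (‖a‖ + ‖u‖) ^ (r - 2) * ‖z - a‖ ^ 2) := by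
          have := max_norm_le hz
          gcongr
      _ = r * (r - 1) * (‖a‖ + ‖u‖) ^ (r - 2) * ‖z - a‖ ^ 2 := by ring
  have descent := le_add_fderiv_add_half_mul_norm_sq
    (fun z _ => hasFDerivAt_norm_rpow z (by linarith : 1 < r)) grad_le
  simp only [add_sub_cancel_left, smul_apply, innerSL_apply_apply,
    smul_eq_mul] at descent
  linarith

theorem norm_add_rpow_le {r : ℝ} (hr : 2 ≤ r) (a u : E) :
    ‖a + u‖ ^ r ≤ ‖a‖ ^ r + r * ‖a‖ ^ (r - 2) * inner ℝ a u
      + 2 ^ max (r - 3) 0 * (r * (r - 1) / 2) * (‖a‖ ^ (r - 2) * ‖u‖ ^ 2 + ‖u‖ ^ r) := by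
  have split := add_rpow_le_two_rpow_mul_add (sub_nonneg.2 hr) (norm_nonneg a) (norm_nonneg u)
  rw [show r - 2 - 1 = r - 3 by ring] at split
  have norm_u_pow : ‖u‖ ^ r = ‖u‖ ^ (r - 2) * ‖u‖ ^ 2 := by
    rw [← rpow_two, ← rpow_add_of_nonneg (norm_nonneg u) (sub_nonneg.2 hr) zero_le_two,
      sub_add_cancel]
  have : 0 ≤ r - 1 := by linarith
  calc ‖a + u‖ ^ r
      ≤ ‖a‖ ^ r + r * ‖a‖ ^ (r - 2) * inner ℝ a u
          + r * (r - 1) / 2 * (‖a‖ + ‖u‖) ^ (r - 2) * ‖u‖ ^ 2 := norm_add_rpow_le_taylor hr a u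
    _ ≤ ‖a‖ ^ r + r * ‖a‖ ^ (r - 2) * inner ℝ a u + r * (r - 1) / 2
          * (2 ^ max (r - 3) 0 * (‖a‖ ^ (r - 2) + ‖u‖ ^ (r - 2))) * ‖u‖ ^ 2 := by gcongr
    _ = ‖a‖ ^ r + r * ‖a‖ ^ (r - 2) * inner ℝ a u
          + 2 ^ max (r - 3) 0 * (r * (r - 1) / 2) * (‖a‖ ^ (r - 2) * ‖u‖ ^ 2 + ‖u‖ ^ r) := by
        rw [norm_u_pow]
        ring

theorem norm_add_sqrt_smul_rpow_le {r h₀ h : ℝ} (hr : 2 ≤ r) (hh : h ∈ Set.Icc 0 h₀) (a w : E) :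
    ‖a + √h • w‖ ^ r ≤ ‖a‖ ^ r * (1 + c₁ r * h) + r * ‖a‖ ^ (r - 2) * √h * inner ℝ a w
      + c₂ r h₀ * h * ‖w‖ ^ r := by
  have expansion := norm_add_rpow_le hr a (√h • w)
  rw [real_inner_smul_right] at expansion
  set k : ℝ := 2 ^ max (r - 3) 0 with hk
  have coeff_nonneg : 0 ≤ k * ((r - 1) / 2) := mul_nonneg (by positivity) (by linarith)
  have norm_sq : ‖√h • w‖ ^ 2 = h * ‖w‖ ^ 2 := by
    rw [norm_smul, mul_pow, norm_eq_abs, sq_abs, sq_sqrt hh.1]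
  have young : r * (‖a‖ ^ (r - 2) * ‖w‖ ^ 2) ≤ (r - 2) * ‖a‖ ^ r + 2 * ‖w‖ ^ r := by
    have := mul_rpow_sub_mul_rpow_le (by linarith) zero_le_two hr (norm_nonneg a) (norm_nonneg w)
    rwa [rpow_two] at this
  have remainder_le : k * (r * (r - 1) / 2) * (‖a‖ ^ (r - 2) * ‖√h • w‖ ^ 2 + ‖√h • w‖ ^ r)
      ≤ c₁ r * h * ‖a‖ ^ r + c₂ r h₀ * h * ‖w‖ ^ r :=
    calc k * (r * (r - 1) / 2) * (‖a‖ ^ (r - 2) * ‖√h • w‖ ^ 2 + ‖√h • w‖ ^ r)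
        = k * ((r - 1) / 2) * (h * (r * (‖a‖ ^ (r - 2) * ‖w‖ ^ 2)) + r * ‖√h • w‖ ^ r) := by
          rw [norm_sq]
          ring
      _ ≤ k * ((r - 1) / 2) * (h * ((r - 2) * ‖a‖ ^ r + 2 * ‖w‖ ^ r)
            + r * (h * h₀ ^ (r / 2 - 1) * ‖w‖ ^ r)) := by
          have := hh.1
          gcongr
          exact norm_sqrt_smul_rpow_le hr hh w
      _ = c₁ r * h * ‖a‖ ^ r + c₂ r h₀ * h * ‖w‖ ^ r := by
          rw [c₁, c₂, ← hk]
          ring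
  linarith

end InnerProductSpace

theorem c₂_nonneg {r h₀ : ℝ} (hr : 1 ≤ r) (hh₀ : 0 ≤ h₀) : 0 ≤ c₂ r h₀ := by
  have : 0 ≤ r - 1 := sub_nonneg.2 hr
  unfold c₂
  positivity

section Moments

variable {Ω E F : Type*} [MeasurableSpace Ω] {P : Measure Ω} [IsProbabilityMeasure P]
  [NormedAddCommGroup E] [InnerProductSpace ℝ E]
  [NormedAddCommGroup F] [NormedSpace ℝ F] [CompleteSpace F]

theorem integral_norm_add_sqrt_smul_rpow_le {r h₀ h : ℝ} (hr : 2 ≤ r) (hh : h ∈ Set.Icc 0 h₀)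
    {X : Ω → E} {a : E} (hXa : Integrable (fun ω => inner ℝ a (X ω)) P)
    (hXa0 : ∫ ω, inner ℝ a (X ω) ∂P = 0) (hXr : Integrable (fun ω => ‖X ω‖ ^ r) P) :
    ∫ ω, ‖a + √h • X ω‖ ^ r ∂P
      ≤ ‖a‖ ^ r * (1 + c₁ r * h) + c₂ r h₀ * h * ∫ ω, ‖X ω‖ ^ r ∂P := by
  have int_inner := hXa.const_mul (r * ‖a‖ ^ (r - 2) * √h)
  have int_const := integrable_const (μ := P) (‖a‖ ^ r * (1 + c₁ r * h))
  have int_pow := hXr.const_mul (c₂ r h₀ * h)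
  have int_affine : Integrable (fun ω =>
      ‖a‖ ^ r * (1 + c₁ r * h) + r * ‖a‖ ^ (r - 2) * √h * inner ℝ a (X ω)) P :=
    int_const.add int_inner
  calc ∫ ω, ‖a + √h • X ω‖ ^ r ∂P
      ≤ ∫ ω, (‖a‖ ^ r * (1 + c₁ r * h) + r * ‖a‖ ^ (r - 2) * √h * inner ℝ a (X ω)
          + c₂ r h₀ * h * ‖X ω‖ ^ r) ∂P :=
        integral_mono_of_nonneg (.of_forall fun ω => by positivity)
          (int_affine.add int_pow)
          (.of_forall fun ω => norm_add_sqrt_smul_rpow_le hr hh a (X ω))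
    _ = ‖a‖ ^ r * (1 + c₁ r * h) + c₂ r h₀ * h * ∫ ω, ‖X ω‖ ^ r ∂P := by
        rw [integral_add int_affine int_pow, integral_add int_const int_inner,
          integral_const, probReal_univ, one_smul, integral_const_mul, integral_const_mul, hXa0,
          mul_zero, add_zero]

theorem moment_bound_affine_gaussian_type_general {r h₀ h : ℝ} (hr : 2 ≤ r)
    (hh : h ∈ Set.Icc 0 h₀) {Z : Ω → F} (hZint : Integrable Z P)
    (hZr : Integrable (fun ω => ‖Z ω‖ ^ r) P) (hZ0 : ∫ ω, Z ω ∂P = 0) (a : E) (A : F →L[ℝ] E) :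
    ∫ ω, ‖a + √h • A (Z ω)‖ ^ r ∂P
      ≤ ‖a‖ ^ r * (1 + c₁ r * h) + c₂ r h₀ * h * ‖A‖ ^ r * ∫ ω, ‖Z ω‖ ^ r ∂P := by
  have hr0 : 0 ≤ r := by linarith
  have hAZ : Integrable (fun ω => A (Z ω)) P := A.integrable_comp hZint
  have inner_mean : ∫ ω, inner ℝ a (A (Z ω)) ∂P = 0 := by
    simpa [hZ0] using (innerSL ℝ a ∘L A).integral_comp_comm hZint
  have norm_le : ∀ ω, ‖A (Z ω)‖ ^ r ≤ ‖A‖ ^ r * ‖Z ω‖ ^ r :=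
    fun ω => norm_clm_apply_rpow_le hr0 A (Z ω)
  have hAZr : Integrable (fun ω => ‖A (Z ω)‖ ^ r) P :=
    (hZr.const_mul (‖A‖ ^ r)).mono' (by fun_prop)
      (.of_forall fun ω => by rw [norm_of_nonneg (by positivity)]; exact norm_le ω)
  have moment_le : ∫ ω, ‖A (Z ω)‖ ^ r ∂P ≤ ‖A‖ ^ r * ∫ ω, ‖Z ω‖ ^ r ∂P := by
    rw [← integral_const_mul]
    exact integral_mono hAZr (hZr.const_mul _) norm_le
  have coeff_nonneg : 0 ≤ c₂ r h₀ * h :=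
    mul_nonneg (c₂_nonneg (by linarith) (hh.1.trans hh.2)) hh.1
  calc ∫ ω, ‖a + √h • A (Z ω)‖ ^ r ∂P
      ≤ ‖a‖ ^ r * (1 + c₁ r * h) + c₂ r h₀ * h * ∫ ω, ‖A (Z ω)‖ ^ r ∂P :=
        integral_norm_add_sqrt_smul_rpow_le hr hh (hAZ.const_inner a) inner_mean hAZr
    _ ≤ ‖a‖ ^ r * (1 + c₁ r * h) + c₂ r h₀ * h * (‖A‖ ^ r * ∫ ω, ‖Z ω‖ ^ r ∂P) := by gcongr
    _ = ‖a‖ ^ r * (1 + c₁ r * h) + c₂ r h₀ * h * ‖A‖ ^ r * ∫ ω, ‖Z ω‖ ^ r ∂P := by ring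

end Moments

/-- Let `r ∈ [2,∞)` and `h₀ > 0`. Let `Z` be an ℝ^q-valued random vector with `E|Z|^r < ∞`
and `E[Z] = 0`, and let `a ∈ ℝ^d`, `A ∈ M(d,q,ℝ)` (acting as a linear map, `‖A‖` the operator
norm). Then for every `h ∈ (0, h₀)`:
`E|a + √h·A Z|^r ≤ |a|^r (1 + c_r^{(1)} h) + c^{(2)}_{r,h₀} h ‖A‖^r E|Z|^r`. -/
theorem moment_bound_affine_gaussian_type (d q : ℕ) (r h₀ h : ℝ) (hr : 2 ≤ r) (hh₀ : 0 < h₀)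
    (hh : h ∈ Set.Ioo 0 h₀)
    (Ω : Type*) [MeasurableSpace Ω] (P : Measure Ω) [IsProbabilityMeasure P]
    (Z : Ω → Euc q) (hZmeas : Measurable Z) (hZint : Integrable Z P)
    (hZr : Integrable (fun ω => ‖Z ω‖ ^ r) P) (hZ0 : ∫ ω, Z ω ∂P = 0)
    (a : Euc d) (A : Euc q →L[ℝ] Euc d) :
    ∫ ω, ‖a + Real.sqrt h • A (Z ω)‖ ^ r ∂P
      ≤ ‖a‖ ^ r * (1 + c₁ r * h) + c₂ r h₀ * h * ‖A‖ ^ r * ∫ ω, ‖Z ω‖ ^ r ∂P :=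
  moment_bound_affine_gaussian_type_general hr (Set.Ioo_subset_Icc_self hh) hZint hZr hZ0 a A
end
end
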